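/- arXiv:1910.12666 — 10 statements merged into one kernel-verified Lean document; each statement's English description precedes it below -/
import Mathlib

section
/- Let |ψ⟩ be a unit vector in ℂ^{d_A} ⊗ ℂ^{d_B} ⊗ ℂ². Suppose there are Hermitian observables X₀, X₁ on ℂ^{d_A} and Y₀, Y₁ on ℂ^{d_B}, each with eigenvalues ±1, such that with Charlie's observables Z₀ = σx, Z₁ = σy, the four conditioning events in CP have positive probability and CP = 4 (the algebraic maximum). Then |ψ⟩ is genuinely multipartite entangled: it does not factorize as a tensor product of a vector on one subsystem with a vector on the remaining two subsystems across any of the three bipartitions A|BC, B|AC, C|AB. -/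
open Matrix Complex
open scoped Matrix Kronecker ComplexOrder

noncomputable section
namespace Paper

/-- Pauli X. -/
def sx : Matrix (Fin 2) (Fin 2) ℂ := !![0, 1; 1, 0]
/-- Pauli Y. -/
def sy : Matrix (Fin 2) (Fin 2) ℂ := !![0, -Complex.I; Complex.I, 0]
/-- Pauli Z. -/
def sz : Matrix (Fin 2) (Fin 2) ℂ := !![1, 0; 0, -1]

/-- Projector onto outcome `a ∈ {0,1}` of a dichotomic observable `O`:
`Π₀ = (I+O)/2`, `Π₁ = (I−O)/2`. -/
def Proj {d : ℕ} (a : Fin 2) (O : Matrix (Fin d) (Fin d) ℂ) : Matrix (Fin d) (Fin d) ℂ :=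
  (2 : ℂ)⁻¹ • (1 + if a = 0 then O else -O)

/-- Outer product `|ψ⟩⟨ψ|`. -/
def outer {n : Type*} (ψ : n → ℂ) : Matrix n n ℂ :=
  Matrix.of fun i j => ψ i * star (ψ j)

/-- `ψ` is a unit vector. -/
def UnitVec {n : Type*} [Fintype n] (ψ : n → ℂ) : Prop := ∑ i, star (ψ i) * ψ i = 1

/-- Hermitian observable with eigenvalues `±1`. -/
def Dichotomic {d : ℕ} (O : Matrix (Fin d) (Fin d) ℂ) : Prop := O.IsHermitian ∧ O * O = 1

/-- Partial trace over the first two tensor factors. -/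
def trAB {dA dB : ℕ} (M : Matrix (Fin dA × Fin dB × Fin 2) (Fin dA × Fin dB × Fin 2) ℂ) :
    Matrix (Fin 2) (Fin 2) ℂ :=
  Matrix.of fun i j => ∑ k : Fin dA, ∑ l : Fin dB, M (k, l, i) (k, l, j)

/-- Unnormalized conditional state on Charlie's qubit:
`σ^C_{a,b|X,Y} = Tr_{AB}[(Π_{a|X} ⊗ Π_{b|Y} ⊗ I₂) ρ]`. -/
def condState {dA dB : ℕ} (ρ : Matrix (Fin dA × Fin dB × Fin 2) (Fin dA × Fin dB × Fin 2) ℂ)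
    (X : Matrix (Fin dA) (Fin dA) ℂ) (Y : Matrix (Fin dB) (Fin dB) ℂ) (a b : Fin 2) :
    Matrix (Fin 2) (Fin 2) ℂ :=
  trAB ((Proj a X ⊗ₖ (Proj b Y ⊗ₖ (1 : Matrix (Fin 2) (Fin 2) ℂ))) * ρ)

/-- Conditional probability `P(c_Z | ·) = Tr[Π_{c|Z} σ] / Tr[σ]`. -/
def condProb (Z σ : Matrix (Fin 2) (Fin 2) ℂ) (c : Fin 2) : ℝ :=
  ((Proj c Z * σ).trace).re / (σ.trace).re

/-- The fine-grained steering expression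
`CP = P(0_{Z₀}|1_{X₀}1_{Y₀}) + P(0_{Z₀}|0_{X₁}1_{Y₁}) + P(0_{Z₁}|0_{X₀}1_{Y₁}) + P(0_{Z₁}|0_{X₁}1_{Y₀})`
with `Z₀ = σx`, `Z₁ = σy`. -/
def CP {dA dB : ℕ} (ρ : Matrix (Fin dA × Fin dB × Fin 2) (Fin dA × Fin dB × Fin 2) ℂ)
    (X0 X1 : Matrix (Fin dA) (Fin dA) ℂ) (Y0 Y1 : Matrix (Fin dB) (Fin dB) ℂ) : ℝ :=
  condProb sx (condState ρ X0 Y0 1 1) 0 + condProb sx (condState ρ X1 Y1 0 1) 0 +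
  condProb sy (condState ρ X0 Y1 0 1) 0 + condProb sy (condState ρ X1 Y0 0 1) 0

/-- The four conditioning events in `CP` have positive probability. -/
def PosEvents {dA dB : ℕ} (ρ : Matrix (Fin dA × Fin dB × Fin 2) (Fin dA × Fin dB × Fin 2) ℂ)
    (X0 X1 : Matrix (Fin dA) (Fin dA) ℂ) (Y0 Y1 : Matrix (Fin dB) (Fin dB) ℂ) : Prop :=
  0 < ((condState ρ X0 Y0 1 1).trace).re ∧ 0 < ((condState ρ X1 Y1 0 1).trace).re ∧
  0 < ((condState ρ X0 Y1 0 1).trace).re ∧ 0 < ((condState ρ X1 Y0 0 1).trace).re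

/-- Product across the bipartition `A|BC`. -/
def BisepA {dA dB : ℕ} (ψ : Fin dA × Fin dB × Fin 2 → ℂ) : Prop :=
  ∃ (u : Fin dA → ℂ) (v : Fin dB × Fin 2 → ℂ), ∀ i j k, ψ (i, j, k) = u i * v (j, k)

/-- Product across the bipartition `B|AC`. -/
def BisepB {dA dB : ℕ} (ψ : Fin dA × Fin dB × Fin 2 → ℂ) : Prop :=
  ∃ (u : Fin dB → ℂ) (v : Fin dA × Fin 2 → ℂ), ∀ i j k, ψ (i, j, k) = u j * v (i, k)

/-- Product across the bipartition `C|AB`. -/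
def BisepC {dA dB : ℕ} (ψ : Fin dA × Fin dB × Fin 2 → ℂ) : Prop :=
  ∃ (u : Fin 2 → ℂ) (v : Fin dA × Fin dB → ℂ), ∀ i j k, ψ (i, j, k) = v (i, j) * u k

/-- Genuine multipartite entanglement: not a product across any bipartition. -/
def GenEnt {dA dB : ℕ} (ψ : Fin dA × Fin dB × Fin 2 → ℂ) : Prop :=
  ¬ BisepA ψ ∧ ¬ BisepB ψ ∧ ¬ BisepC ψ


theorem proj_psd {d : ℕ} (a : Fin 2) {O : Matrix (Fin d) (Fin d) ℂ} (h : Dichotomic O) :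
    (Proj a O).PosSemidef := by
  obtain ⟨h1, h2⟩ := h
  have hH : (Proj a O)ᴴ = Proj a O := by
    unfold Proj
    rw [conjTranspose_smul, conjTranspose_add, conjTranspose_one]
    split_ifs <;> simp [h1.eq]
  have hI : Proj a O * Proj a O = Proj a O := by
    unfold Proj
    rw [smul_mul_smul_comm]
    split_ifs
    · have : (1 + O) * (1 + O) = (2 : ℂ) • (1 + O) := by
        rw [mul_add, add_mul, add_mul, h2, two_smul]; simp; abel
      rw [this, smul_smul]; norm_num
    · have : (1 + -O) * (1 + -O) = (2 : ℂ) • (1 + -O) := by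
        rw [mul_add, add_mul, add_mul, neg_mul_neg, h2, two_smul]; simp; abel
      rw [this, smul_smul]; norm_num
  rw [← hI]
  nth_rewrite 1 [← hH]
  exact posSemidef_conjTranspose_mul_self _

theorem condState_apply {dA dB : ℕ} (ψ : Fin dA × Fin dB × Fin 2 → ℂ)
    (X : Matrix (Fin dA) (Fin dA) ℂ) (Y : Matrix (Fin dB) (Fin dB) ℂ) (a b i j : Fin 2) :
    condState (outer ψ) X Y a b i j = ∑ k, ∑ l, ∑ k', ∑ l',
      Proj a X k k' * Proj b Y l l' * (ψ (k', l', i) * star (ψ (k, l, j))) := by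
  simp only [condState, trAB, of_apply, mul_apply, Fintype.sum_prod_type, kroneckerMap_apply,
    outer, one_apply]
  simp [mul_assoc]

theorem condState_psd {dA dB : ℕ} (ψ : Fin dA × Fin dB × Fin 2 → ℂ)
    {X : Matrix (Fin dA) (Fin dA) ℂ} {Y : Matrix (Fin dB) (Fin dB) ℂ} (a b : Fin 2)
    (hX : Dichotomic X) (hY : Dichotomic Y) :
    (condState (outer ψ) X Y a b).PosSemidef := by
  let B : Matrix (Fin dA × Fin dB) (Fin 2) ℂ := of fun p i => ψ (p.1, p.2, i)
  have h := (((proj_psd a hX).kronecker (proj_psd b hY)).conjTranspose_mul_mul_same B).transpose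
  suffices hs : condState (outer ψ) X Y a b =
      (Bᴴ * kroneckerMap (fun x y => x * y) (Proj a X) (Proj b Y) * B)ᵀ by
    rw [hs]; exact h
  ext i j
  rw [condState_apply]
  simp only [transpose_apply, mul_apply, conjTranspose_apply, B, of_apply, kroneckerMap_apply,
    Fintype.sum_prod_type, Finset.sum_mul]
  symm
  have e : ∀ f : Fin dA → Fin dB → Fin dA → Fin dB → ℂ,
      ∑ k', ∑ l', ∑ k, ∑ l, f k l k' l' = ∑ k, ∑ l, ∑ k', ∑ l', f k l k' l' := by
    intro f
    have := Finset.sum_comm (s := (Finset.univ : Finset (Fin dA × Fin dB)))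
      (t := (Finset.univ : Finset (Fin dA × Fin dB))) (f := fun p q => f q.1 q.2 p.1 p.2)
    simpa only [Fintype.sum_prod_type] using this
  rw [← e]
  refine Finset.sum_congr rfl fun _ _ => Finset.sum_congr rfl fun _ _ =>
    Finset.sum_congr rfl fun _ _ => Finset.sum_congr rfl fun _ _ => ?_
  ring

theorem psd_facts {σ : Matrix (Fin 2) (Fin 2) ℂ} (h : σ.PosSemidef) :
    σ 1 0 = star (σ 0 1) ∧ (σ 0 0).im = 0 ∧ (σ 1 1).im = 0 ∧
    (σ 0 1).re ^ 2 + (σ 0 1).im ^ 2 ≤ (σ 0 0).re * (σ 1 1).re := by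
  have hb : σ 1 0 = star (σ 0 1) := (h.isHermitian.apply 1 0).symm
  have h0 := (Complex.le_def.1 (h.diag_nonneg (i := 0))).2
  have h1 := (Complex.le_def.1 (h.diag_nonneg (i := 1))).2
  have hd := (Complex.le_def.1 h.det_nonneg).1
  rw [det_fin_two, hb] at hd
  simp at hd h0 h1
  refine ⟨hb, h0.symm, h1.symm, ?_⟩
  rw [← h0, ← h1] at hd
  nlinarith

theorem condProb_sx {σ : Matrix (Fin 2) (Fin 2) ℂ} (h : σ.PosSemidef) :
    condProb sx σ 0 = (((σ 0 0).re + (σ 1 1).re) / 2 + (σ 0 1).re) /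
      ((σ 0 0).re + (σ 1 1).re) := by
  obtain ⟨hb, h0, h1, -⟩ := psd_facts h
  unfold condProb Proj sx
  congr 1
  · simp [trace_fin_two, mul_apply, Fin.sum_univ_two, hb]; ring
  · simp [trace_fin_two]

theorem condProb_sy {σ : Matrix (Fin 2) (Fin 2) ℂ} (h : σ.PosSemidef) :
    condProb sy σ 0 = (((σ 0 0).re + (σ 1 1).re) / 2 - (σ 0 1).im) /
      ((σ 0 0).re + (σ 1 1).re) := by
  obtain ⟨hb, h0, h1, -⟩ := psd_facts h
  unfold condProb Proj sy
  congr 1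
  · simp [trace_fin_two, mul_apply, Fin.sum_univ_two, hb]; ring
  · simp [trace_fin_two]

theorem sx_le {σ : Matrix (Fin 2) (Fin 2) ℂ} (h : σ.PosSemidef) (ht : 0 < σ.trace.re) :
    condProb sx σ 0 ≤ 1 := by
  rw [condProb_sx h]
  obtain ⟨-, -, -, hd⟩ := psd_facts h
  rw [trace_fin_two, add_re] at ht
  rw [div_le_one ht]
  have : (σ 0 1).re ≤ ((σ 0 0).re + (σ 1 1).re) / 2 := by
    refine abs_le_of_sq_le_sq' ?_ ?_ |>.2 <;> nlinarith [sq_nonneg ((σ 0 0).re - (σ 1 1).re), sq_nonneg (σ 0 1).im]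
  linarith

theorem sy_le {σ : Matrix (Fin 2) (Fin 2) ℂ} (h : σ.PosSemidef) (ht : 0 < σ.trace.re) :
    condProb sy σ 0 ≤ 1 := by
  rw [condProb_sy h]
  obtain ⟨-, -, -, hd⟩ := psd_facts h
  rw [trace_fin_two, add_re] at ht
  rw [div_le_one ht]
  have : -(σ 0 1).im ≤ ((σ 0 0).re + (σ 1 1).re) / 2 := by
    refine abs_le_of_sq_le_sq' ?_ ?_ |>.2 <;> nlinarith [sq_nonneg ((σ 0 0).re - (σ 1 1).re), sq_nonneg (σ 0 1).re]
  linarith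

theorem clash {σ τ : Matrix (Fin 2) (Fin 2) ℂ} (h : σ.PosSemidef) (h' : τ.PosSemidef)
    (ht : 0 < σ.trace.re) (ht' : 0 < τ.trace.re)
    (hp : ∃ (c c' : ℂ) (ω : Matrix (Fin 2) (Fin 2) ℂ), σ = c • ω ∧ τ = c' • ω)
    (hx : condProb sx σ 0 = 1) (hy : condProb sy τ 0 = 1) : False := by
  have key : τ.trace * σ 0 1 = σ.trace * τ 0 1 := by
    obtain ⟨c, c', ω, rfl, rfl⟩ := hp
    simp only [trace_smul, Matrix.smul_apply, smul_eq_mul]; ring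
  rw [condProb_sx h] at hx
  rw [condProb_sy h'] at hy
  obtain ⟨-, a0, a1, hd⟩ := psd_facts h
  obtain ⟨-, b0, b1, hd'⟩ := psd_facts h'
  rw [trace_fin_two, add_re] at ht ht'
  rw [div_eq_one_iff_eq ht.ne'] at hx
  rw [div_eq_one_iff_eq ht'.ne'] at hy
  have k := congrArg Complex.re key
  simp [trace_fin_two, a0, a1, b0, b1] at k
  have hre : (τ 0 1).re = ((τ 0 0).re + (τ 1 1).re) / 2 := by
    have : (σ 0 1).re = ((σ 0 0).re + (σ 1 1).re) / 2 := by linarith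
    rw [this] at k
    apply mul_left_cancel₀ ht.ne'
    linarith
  have him : (τ 0 1).im = -(((τ 0 0).re + (τ 1 1).re) / 2) := by linarith
  rw [hre, him] at hd'
  nlinarith [sq_nonneg ((τ 0 0).re - (τ 1 1).re), mul_pos ht' ht']

theorem propA {dA dB : ℕ} {ψ : Fin dA × Fin dB × Fin 2 → ℂ} (u : Fin dA → ℂ)
    (v : Fin dB × Fin 2 → ℂ) (hψ : ∀ i j k, ψ (i, j, k) = u i * v (j, k))
    (X : Matrix (Fin dA) (Fin dA) ℂ) (Y : Matrix (Fin dB) (Fin dB) ℂ) (a b : Fin 2) :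
    condState (outer ψ) X Y a b = (∑ k, ∑ k', Proj a X k k' * (u k' * star (u k))) •
      (of fun i j => ∑ l, ∑ l', Proj b Y l l' * (v (l', i) * star (v (l, j)))) := by
  ext i j
  rw [condState_apply]
  simp only [hψ, Matrix.smul_apply, of_apply, smul_eq_mul, Finset.sum_mul_sum, star_mul']
  refine Finset.sum_congr rfl fun k _ => ?_
  refine Finset.sum_congr rfl fun _ _ => Finset.sum_congr rfl fun _ _ =>
    Finset.sum_congr rfl fun _ _ => ?_
  ring

theorem propB {dA dB : ℕ} {ψ : Fin dA × Fin dB × Fin 2 → ℂ} (u : Fin dB → ℂ)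
    (v : Fin dA × Fin 2 → ℂ) (hψ : ∀ i j k, ψ (i, j, k) = u j * v (i, k))
    (X : Matrix (Fin dA) (Fin dA) ℂ) (Y : Matrix (Fin dB) (Fin dB) ℂ) (a b : Fin 2) :
    condState (outer ψ) X Y a b = (∑ l, ∑ l', Proj b Y l l' * (u l' * star (u l))) •
      (of fun i j => ∑ k, ∑ k', Proj a X k k' * (v (k', i) * star (v (k, j)))) := by
  ext i j
  rw [condState_apply]
  simp only [hψ, Matrix.smul_apply, of_apply, smul_eq_mul, Finset.sum_mul_sum, star_mul']
  rw [Finset.sum_comm]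
  refine Finset.sum_congr rfl fun _ _ => Finset.sum_congr rfl fun _ _ => ?_
  rw [Finset.sum_comm]
  refine Finset.sum_congr rfl fun _ _ => Finset.sum_congr rfl fun _ _ => ?_
  ring

theorem propC {dA dB : ℕ} {ψ : Fin dA × Fin dB × Fin 2 → ℂ} (u : Fin 2 → ℂ)
    (v : Fin dA × Fin dB → ℂ) (hψ : ∀ i j k, ψ (i, j, k) = v (i, j) * u k)
    (X : Matrix (Fin dA) (Fin dA) ℂ) (Y : Matrix (Fin dB) (Fin dB) ℂ) (a b : Fin 2) :
    condState (outer ψ) X Y a b = (∑ k, ∑ l, ∑ k', ∑ l',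
      Proj a X k k' * Proj b Y l l' * (v (k', l') * star (v (k, l)))) •
      (of fun i j => u i * star (u j)) := by
  ext i j
  rw [condState_apply]
  simp only [hψ, Matrix.smul_apply, of_apply, smul_eq_mul, Finset.sum_mul, star_mul']
  refine Finset.sum_congr rfl fun _ _ => Finset.sum_congr rfl fun _ _ =>
    Finset.sum_congr rfl fun _ _ => Finset.sum_congr rfl fun _ _ => ?_
  ring

/-- maximal violation `CP = 4` of the fine-grained inequality by a pure state
on `ℂ^{dA} ⊗ ℂ^{dB} ⊗ ℂ²` certifies genuine multipartite entanglement. -/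
theorem stmt0 {dA dB : ℕ} (ψ : Fin dA × Fin dB × Fin 2 → ℂ) (hψ : UnitVec ψ)
    (X0 X1 : Matrix (Fin dA) (Fin dA) ℂ) (Y0 Y1 : Matrix (Fin dB) (Fin dB) ℂ)
    (hX0 : Dichotomic X0) (hX1 : Dichotomic X1) (hY0 : Dichotomic Y0) (hY1 : Dichotomic Y1)
    (hpos : PosEvents (outer ψ) X0 X1 Y0 Y1)
    (hCP : CP (outer ψ) X0 X1 Y0 Y1 = 4) :
    GenEnt ψ := by
  obtain ⟨p1, p2, p3, p4⟩ := hpos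
  have s1 := condState_psd ψ 1 1 hX0 hY0
  have s2 := condState_psd ψ 0 1 hX1 hY1
  have s3 := condState_psd ψ 0 1 hX0 hY1
  have s4 := condState_psd ψ 0 1 hX1 hY0
  have l1 := sx_le s1 p1
  have l2 := sx_le s2 p2
  have l3 := sy_le s3 p3
  have l4 := sy_le s4 p4
  unfold CP at hCP
  have e1 : condProb sx (condState (outer ψ) X0 Y0 1 1) 0 = 1 := by linarith
  have e2 : condProb sx (condState (outer ψ) X1 Y1 0 1) 0 = 1 := by linarith
  have e4 : condProb sy (condState (outer ψ) X1 Y0 0 1) 0 = 1 := by linarith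
  refine ⟨?_, ?_, ?_⟩
  · rintro ⟨u, v, h⟩
    exact clash s1 s4 p1 p4 ⟨_, _, _, propA u v h X0 Y0 1 1, propA u v h X1 Y0 0 1⟩ e1 e4
  · rintro ⟨u, v, h⟩
    exact clash s2 s4 p2 p4 ⟨_, _, _, propB u v h X1 Y1 0 1, propB u v h X1 Y0 0 1⟩ e2 e4
  · rintro ⟨u, v, h⟩
    exact clash s1 s4 p1 p4 ⟨_, _, _, propC u v h X0 Y0 1 1, propC u v h X1 Y0 0 1⟩ e1 e4

end Paper
end
end

section
/- Let θ ∈ (0, π/2) and let |ψ(θ)⟩ = cos θ·|000⟩ + sin θ·|111⟩ be the generalized GHZ state. Let Alice measure X₀ = σx, X₁ = σy and Bob measure Y₀ = (σx+σz)/√2, Y₁ = (σy+σz)/√2. Then the assemblage of Charlie's unnormalized conditional states σ^C_{a,b|X_x,Y_y} = Tr_{AB}[(Π_{a|X_x} ⊗ Π_{b|Y_y} ⊗ I₂) |ψ(θ)⟩⟨ψ(θ)|] admits no local-hidden-state (LHS) model. -/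
open Matrix Complex
open scoped Matrix Kronecker ComplexOrder

noncomputable section
namespace Paper

/-- Alice's observables `X₀ = σx`, `X₁ = σy`. -/
def XA : Fin 2 → Matrix (Fin 2) (Fin 2) ℂ := fun x => if x = 0 then sx else sy

/-- Bob's observables `Y₀ = (σx+σz)/√2`, `Y₁ = (σy+σz)/√2`. -/
def YB : Fin 2 → Matrix (Fin 2) (Fin 2) ℂ := fun y =>
  if y = 0 then (Real.sqrt 2 : ℂ)⁻¹ • (sx + sz) else (Real.sqrt 2 : ℂ)⁻¹ • (sy + sz)

/-- The generalized GHZ state `cos θ·|000⟩ + sin θ·|111⟩`. -/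
def ggHZ (θ : ℝ) : Fin 2 × Fin 2 × Fin 2 → ℂ := fun i =>
  if i = (0, 0, 0) then (Real.cos θ : ℂ) else if i = (1, 1, 1) then (Real.sin θ : ℂ) else 0

/-- A local-hidden-state (LHS) model for an assemblage `σa a b x y` of 2×2 matrices. -/
def HasLHS (σa : Fin 2 → Fin 2 → Fin 2 → Fin 2 → Matrix (Fin 2) (Fin 2) ℂ) : Prop :=
  ∃ (n : ℕ) (p : Fin n → ℝ) (ρh : Fin n → Matrix (Fin 2) (Fin 2) ℂ)
    (PA PB : Fin 2 → Fin 2 → Fin n → ℝ),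
    (∀ l, 0 ≤ p l) ∧ (∑ l, p l) = 1 ∧
    (∀ l, (ρh l).PosSemidef ∧ (ρh l).trace = 1) ∧
    (∀ a x l, 0 ≤ PA a x l ∧ PA a x l ≤ 1) ∧
    (∀ b y l, 0 ≤ PB b y l ∧ PB b y l ≤ 1) ∧
    (∀ x l, ∑ a, PA a x l = 1) ∧ (∀ y l, ∑ b, PB b y l = 1) ∧
    (∀ a b x y, σa a b x y = ∑ l, ((p l * PA a x l * PB b y l : ℝ) : ℂ) • ρh l)

/-- Sign attached to an outcome. -/
def sgn (a : Fin 2) : ℝ := if a = 0 then 1 else -1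

lemma sgn_sq (a : Fin 2) : sgn a * sgn a = 1 := by
  unfold sgn; split_ifs <;> norm_num

lemma tt : ((Real.sqrt 2 : ℂ)⁻¹) * ((Real.sqrt 2 : ℂ)⁻¹) = 1 / 2 := by
  rw [← mul_inv, ← Complex.ofReal_mul, Real.mul_self_sqrt (by norm_num)]
  norm_num

lemma cond0 (θ : ℝ) (a b : Fin 2) :
    condState (outer (ggHZ θ)) (XA 0) (YB 0) a b *ᵥ
      ![-((sgn a * sgn b * (Real.sqrt 2)⁻¹ * Real.sin θ : ℝ) : ℂ),
        ((Real.cos θ * (1 + sgn b * (Real.sqrt 2)⁻¹) : ℝ) : ℂ)] = 0 := by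
  have h := tt
  ext i
  fin_cases a <;> fin_cases b <;> fin_cases i <;>
    simp [condState, trAB, Proj, outer, ggHZ, XA, YB, sx, sz, sgn, Matrix.mul_apply, Matrix.mulVec,
      dotProduct, Fintype.sum_prod_type, Fin.sum_univ_two, Matrix.one_apply, -ofReal_cos, -ofReal_sin] <;>
    grind

lemma cond1 (θ : ℝ) (a b : Fin 2) :
    condState (outer (ggHZ θ)) (XA 0) (YB 1) a b *ᵥ
      ![-((sgn a * sgn b * (Real.sqrt 2)⁻¹ * Real.sin θ : ℝ) : ℂ) * Complex.I,
        ((Real.cos θ * (1 + sgn b * (Real.sqrt 2)⁻¹) : ℝ) : ℂ)] = 0 := by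
  have h := tt
  have hI := Complex.I_mul_I
  ext i
  fin_cases a <;> fin_cases b <;> fin_cases i <;>
    simp [condState, trAB, Proj, outer, ggHZ, XA, YB, sx, sy, sz, sgn, Matrix.mul_apply, Matrix.mulVec,
      dotProduct, Fintype.sum_prod_type, Fin.sum_univ_two, Matrix.one_apply, -ofReal_cos, -ofReal_sin] <;>
    grind

/-- A vector annihilated by a nonnegative combination of PSD matrices is annihilated by each
matrix carrying positive weight. -/
lemma ker_of_sum {n : ℕ} (q : Fin n → ℝ) (R : Fin n → Matrix (Fin 2) (Fin 2) ℂ)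
    (hq : ∀ l, 0 ≤ q l) (hR : ∀ l, (R l).PosSemidef) (v : Fin 2 → ℂ)
    (h : (∑ l, ((q l : ℝ) : ℂ) • R l) *ᵥ v = 0) (l : Fin n) (hl : 0 < q l) :
    R l *ᵥ v = 0 := by
  rw [← (hR l).dotProduct_mulVec_zero_iff]
  have h1 : ∑ l, ((q l : ℝ) : ℂ) * (star v ⬝ᵥ (R l *ᵥ v)) = 0 := by
    have := congrArg (fun w => star v ⬝ᵥ w) h
    simpa only [Matrix.sum_mulVec, dotProduct_sum, Matrix.smul_mulVec, dotProduct_smul,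
      smul_eq_mul, dotProduct_zero] using this
  have h2 := (Finset.sum_eq_zero_iff_of_nonneg (fun i _ =>
    mul_nonneg (by exact_mod_cast hq i) ((hR i).dotProduct_mulVec_nonneg v))).1 h1 l
      (Finset.mem_univ l)
  rcases mul_eq_zero.1 h2 with h3 | h3
  · exact absurd (by exact_mod_cast h3) hl.ne'
  · exact h3

lemma fin2_pos (f : Fin 2 → ℝ) (hf : ∀ a, 0 ≤ f a) (h : ∑ a, f a = 1) : ∃ a, 0 < f a := by
  by_contra! hc
  have := Finset.sum_nonpos (s := Finset.univ) (fun a _ => hc a)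
  linarith

lemma lin_indep (x y : ℂ) (k m u u' : ℝ) (hk : k ≠ 0) (hu' : u' ≠ 0)
    (h1 : x * -(k : ℂ) + y * u = 0) (h2 : x * (-(m : ℂ) * Complex.I) + y * u' = 0) : x = 0 := by
  have h3 : x * (((k * u' : ℝ) : ℂ) - ((m * u : ℝ) : ℂ) * Complex.I) = 0 := by
    push_cast
    linear_combination (-(u' : ℂ)) * h1 + (u : ℂ) * h2
  rcases mul_eq_zero.1 h3 with h | h
  · exact h
  · have := congrArg Complex.re h
    simp [hk, hu'] at this

/-- the assemblage prepared on Charlie's qubit from the generalized GHZ state by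
Alice's measurements `σx, σy` and Bob's measurements `(σx+σz)/√2, (σy+σz)/√2` admits no LHS
model. -/
theorem stmt4 (θ : ℝ) (hθ : 0 < θ) (hθ' : θ < Real.pi / 2) :
    ¬ HasLHS (fun a b x y => condState (outer (ggHZ θ)) (XA x) (YB y) a b) := by
  rintro ⟨n, p, R, PA, PB, hp, hp1, hR, hPA, hPB, hA, hB, hσ⟩
  have hs : Real.sin θ ≠ 0 := (Real.sin_pos_of_pos_of_lt_pi hθ (by linarith [Real.pi_pos])).ne'
  have hc : Real.cos θ ≠ 0 := (Real.cos_pos_of_mem_Ioo ⟨by linarith, hθ'⟩).ne'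
  obtain ⟨l, hl⟩ : ∃ l, 0 < p l := by
    by_contra! hc
    have := Finset.sum_nonpos (s := Finset.univ) (fun a _ => hc a)
    linarith
  obtain ⟨a, ha⟩ := fin2_pos (fun a => PA a 0 l) (fun a => (hPA a 0 l).1) (hA 0 l)
  obtain ⟨b, hb⟩ := fin2_pos (fun b => PB b 0 l) (fun b => (hPB b 0 l).1) (hB 0 l)
  obtain ⟨b', hb'⟩ := fin2_pos (fun b => PB b 1 l) (fun b => (hPB b 1 l).1) (hB 1 l)
  have k0 := cond0 θ a b
  have k1 := cond1 θ a b'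
  have e0 := hσ a b 0 0
  have e1 := hσ a b' 0 1
  simp only at e0 e1
  rw [e0] at k0
  rw [e1] at k1
  have r0 := ker_of_sum _ R (fun l => mul_nonneg (mul_nonneg (hp l) (hPA _ _ l).1) (hPB _ _ l).1)
    (fun l => (hR l).1) _ k0 l (mul_pos (mul_pos hl ha) hb)
  have r1 := ker_of_sum _ R (fun l => mul_nonneg (mul_nonneg (hp l) (hPA _ _ l).1) (hPB _ _ l).1)
    (fun l => (hR l).1) _ k1 l (mul_pos (mul_pos hl ha) hb')
  have ht : (Real.sqrt 2)⁻¹ * (Real.sqrt 2)⁻¹ = 1 / 2 := by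
    rw [← mul_inv, Real.mul_self_sqrt (by norm_num)]; norm_num
  have hu : ∀ b, 1 + sgn b * (Real.sqrt 2)⁻¹ ≠ 0 := by
    intro b h
    have := sgn_sq b
    have h' : sgn b * (Real.sqrt 2)⁻¹ = -1 := by linarith
    have : (sgn b * sgn b) * ((Real.sqrt 2)⁻¹ * (Real.sqrt 2)⁻¹) = 1 := by
      linear_combination (sgn b * (Real.sqrt 2)⁻¹ - 1) * h'
    rw [sgn_sq, ht] at this
    norm_num at this
  have hsg : ∀ b, sgn b ≠ 0 := fun b h => by have := sgn_sq b; simp [h] at this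
  have hk : sgn a * sgn b * (Real.sqrt 2)⁻¹ * Real.sin θ ≠ 0 :=
    mul_ne_zero (mul_ne_zero (mul_ne_zero (hsg a) (hsg b)) (by positivity)) hs
  have row : ∀ i, R l i 0 = 0 ∧ R l i 1 = 0 := by
    intro i
    have q0 := congrFun r0 i
    have q1 := congrFun r1 i
    simp only [Matrix.mulVec, dotProduct, Fin.sum_univ_two, Matrix.cons_val_zero,
      Matrix.cons_val_one, Pi.zero_apply] at q0 q1
    have hx := lin_indep _ _ _ _ _ _ hk (mul_ne_zero hc (hu b')) q0 q1
    refine ⟨hx, ?_⟩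
    rw [hx, zero_mul, zero_add] at q0
    exact (mul_eq_zero.1 q0).resolve_right (by exact_mod_cast mul_ne_zero hc (hu b))
  have htr := (hR l).2
  simp [Matrix.trace, Fin.sum_univ_two, (row 0).1, (row 1).2] at htr

end Paper
end
end

section
/- Let θ ∈ (0, π/2) and let |ψ(θ)⟩ = cos θ·|000⟩ + sin θ·|111⟩ be the generalized GHZ state. Let Alice measure X₀ = σx, X₁ = σy, and define the unnormalized conditional states on the Bob–Charlie pair σ^{BC}_{a|X_x} = Tr_A[(Π_{a|X_x} ⊗ I₄) |ψ(θ)⟩⟨ψ(θ)|] (partial trace over the first qubit). Then there exist no n ∈ ℕ, weights p : Fin n → ℝ with p(λ) ≥ 0 and Σ_λ p(λ) = 1, two-qubit density matrices ρ^{BC}_λ (4×4 positive semidefinite, trace 1), and numbers P_A(a|x,λ) ∈ [0,1] with Σ_a P_A(a|x,λ) = 1, such that σ^{BC}_{a|X_x} = Σ_λ p(λ)·P_A(a|x,λ)·ρ^{BC}_λ for all a, x ∈ {0,1}. -/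
open Matrix Complex
open scoped Matrix Kronecker ComplexOrder

noncomputable section
namespace Paper

/-- Partial trace over the first qubit of a three-qubit matrix. -/
def trA3 (M : Matrix (Fin 2 × Fin 2 × Fin 2) (Fin 2 × Fin 2 × Fin 2) ℂ) :
    Matrix (Fin 2 × Fin 2) (Fin 2 × Fin 2) ℂ :=
  Matrix.of fun i j => ∑ k : Fin 2, M (k, i.1, i.2) (k, j.1, j.2)

/-- Unnormalized conditional state on the Bob–Charlie pair:
`σ^{BC}_{a|X} = Tr_A[(Π_{a|X} ⊗ I₄) ρ]`. -/
def condStateBC (ρ : Matrix (Fin 2 × Fin 2 × Fin 2) (Fin 2 × Fin 2 × Fin 2) ℂ)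
    (X : Matrix (Fin 2) (Fin 2) ℂ) (a : Fin 2) : Matrix (Fin 2 × Fin 2) (Fin 2 × Fin 2) ℂ :=
  trA3 ((Proj a X ⊗ₖ (1 : Matrix (Fin 2 × Fin 2) (Fin 2 × Fin 2) ℂ)) * ρ)


lemma entry_eq (θ : ℝ) (a x : Fin 2) :
    condStateBC (outer (ggHZ θ)) (XA x) a (0,0) (0,0) = ((Real.cos θ ^ 2 / 2 : ℝ) : ℂ) ∧
    condStateBC (outer (ggHZ θ)) (XA x) a (1,1) (1,1) = ((Real.sin θ ^ 2 / 2 : ℝ) : ℂ) ∧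
    condStateBC (outer (ggHZ θ)) (XA x) a (0,0) (1,1) =
      ((Real.cos θ * Real.sin θ / 2 * (if a = 0 then 1 else -1) : ℝ) : ℂ) *
        (if x = 0 then 1 else Complex.I) := by
  refine ⟨?_, ?_, ?_⟩ <;> fin_cases a <;> fin_cases x <;>
    simp [condStateBC, trA3, outer, ggHZ, XA, Proj, sx, sy, Matrix.mul_apply,
      Fintype.sum_prod_type, Matrix.kroneckerMap_apply, Matrix.one_apply, -Complex.ofReal_cos,
      -Complex.ofReal_sin] <;> ring

lemma form_nonneg (M : Matrix (Fin 2 × Fin 2) (Fin 2 × Fin 2) ℂ) (hM : M.PosSemidef)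
    (s c r t : ℝ) :
    0 ≤ s ^ 2 * (M (0,0) (0,0)).re + c ^ 2 * (r ^ 2 + t ^ 2) * (M (1,1) (1,1)).re
      + 2 * s * c * (r * (M (0,0) (1,1)).re - t * (M (0,0) (1,1)).im) := by
  have h := hM.dotProduct_mulVec_nonneg
    (fun i => if i = (0,0) then (s : ℂ) else if i = (1,1) then c * (r + t * Complex.I) else 0)
  have h2 := (Complex.le_def.1 h).1
  have h3 : M (1,1) (0,0) = star (M (0,0) (1,1)) := (hM.1.apply _ _).symm
  simp [dotProduct, Matrix.mulVec, Fintype.sum_prod_type, h3] at h2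
  have h4 : (M (0,0) (0,0)).im = 0 := by
    have := congrArg Complex.im (hM.1.apply (0,0) (0,0)); simp at this; linarith
  have h5 : (M (1,1) (1,1)).im = 0 := by
    have := congrArg Complex.im (hM.1.apply (1,1) (1,1)); simp at this; linarith
  simp [h5] at h2
  nlinarith [h2]

/-- the assemblage on the Bob–Charlie pair prepared from the generalized GHZ state
by Alice's measurements `σx, σy` admits no LHS-type decomposition. -/
theorem stmt5 (θ : ℝ) (hθ : 0 < θ) (hθ' : θ < Real.pi / 2) :
    ¬ ∃ (n : ℕ) (p : Fin n → ℝ) (ρBC : Fin n → Matrix (Fin 2 × Fin 2) (Fin 2 × Fin 2) ℂ)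
      (PA : Fin 2 → Fin 2 → Fin n → ℝ),
      (∀ l, 0 ≤ p l) ∧ (∑ l, p l) = 1 ∧
      (∀ l, (ρBC l).PosSemidef ∧ (ρBC l).trace = 1) ∧
      (∀ a x l, 0 ≤ PA a x l ∧ PA a x l ≤ 1) ∧
      (∀ x l, ∑ a, PA a x l = 1) ∧
      (∀ a x, condStateBC (outer (ggHZ θ)) (XA x) a
        = ∑ l, ((p l * PA a x l : ℝ) : ℂ) • ρBC l) := by
  rintro ⟨n, p, ρ, PA, hp, hp1, hρ, hPA, hPA1, hσ⟩
  have hc : 0 < Real.cos θ := Real.cos_pos_of_mem_Ioo ⟨by linarith, hθ'⟩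
  have hs : 0 < Real.sin θ := Real.sin_pos_of_pos_of_lt_pi hθ (by linarith)
  have hE := entry_eq θ
  simp only [hσ] at hE
  generalize Real.cos θ = c at *
  generalize Real.sin θ = s at *
  have hsum : ∀ a x i j, (∑ l, ((p l * PA a x l : ℝ) : ℂ) • ρ l) i j
      = ∑ l, ((p l * PA a x l : ℝ) : ℂ) * ρ l i j := by
    intro a x i j
    simp [Matrix.sum_apply]
  simp only [hsum] at hE
  have hA : ∀ a x, ∑ l, p l * PA a x l * (ρ l (0,0) (0,0)).re = c ^ 2 / 2 := by
    intro a x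
    have := congrArg Complex.re (hE a x).1
    rwa [Complex.re_sum, Complex.ofReal_re, Finset.sum_congr rfl
      (fun l _ => Complex.re_ofReal_mul _ _)] at this
  have hB : ∀ a x, ∑ l, p l * PA a x l * (ρ l (1,1) (1,1)).re = s ^ 2 / 2 := by
    intro a x
    have := congrArg Complex.re (hE a x).2.1
    rwa [Complex.re_sum, Complex.ofReal_re, Finset.sum_congr rfl
      (fun l _ => Complex.re_ofReal_mul _ _)] at this
  have hR : ∀ a, ∑ l, p l * PA a 0 l * (ρ l (0,0) (1,1)).re
      = c * s / 2 * (if a = 0 then 1 else -1) := by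
    intro a
    have := congrArg Complex.re (hE a 0).2.2
    rwa [Complex.re_sum, if_pos rfl, mul_one, Complex.ofReal_re, Finset.sum_congr rfl
      (fun l _ => Complex.re_ofReal_mul _ _)] at this
  have hI : ∀ a, ∑ l, p l * PA a 1 l * (ρ l (0,0) (1,1)).im
      = c * s / 2 * (if a = 0 then 1 else -1) := by
    intro a
    have := congrArg Complex.im (hE a 1).2.2
    rwa [Complex.im_sum, if_neg (show ¬ ((1 : Fin 2) = 0) by decide), Complex.im_ofReal_mul, Complex.I_im, mul_one, Finset.sum_congr rfl
      (fun l _ => Complex.im_ofReal_mul _ _)] at this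
  have key : ∀ a x l, p l * PA a x l * (s ^ 2 * (ρ l (0,0) (0,0)).re
      + c ^ 2 * (ρ l (1,1) (1,1)).re - 2 * s * c * (if a = 0 then 1 else -1) *
        (if x = 0 then (ρ l (0,0) (1,1)).re else (ρ l (0,0) (1,1)).im)) = 0 := by
    intro a x
    have hz : ∑ l, p l * PA a x l * (s ^ 2 * (ρ l (0,0) (0,0)).re
      + c ^ 2 * (ρ l (1,1) (1,1)).re - 2 * s * c * (if a = 0 then 1 else -1) *
        (if x = 0 then (ρ l (0,0) (1,1)).re else (ρ l (0,0) (1,1)).im)) = 0 := by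
      have e : ∀ l, p l * PA a x l * (s ^ 2 * (ρ l (0,0) (0,0)).re
        + c ^ 2 * (ρ l (1,1) (1,1)).re - 2 * s * c * (if a = 0 then 1 else -1) *
        (if x = 0 then (ρ l (0,0) (1,1)).re else (ρ l (0,0) (1,1)).im))
        = s ^ 2 * (p l * PA a x l * (ρ l (0,0) (0,0)).re)
        + c ^ 2 * (p l * PA a x l * (ρ l (1,1) (1,1)).re)
        - 2 * s * c * (if a = 0 then 1 else -1) * (p l * PA a x l *
        (if x = 0 then (ρ l (0,0) (1,1)).re else (ρ l (0,0) (1,1)).im)) := fun l => by ring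
      simp only [e]
      rw [Finset.sum_sub_distrib, Finset.sum_add_distrib, ← Finset.mul_sum, ← Finset.mul_sum,
        ← Finset.mul_sum, hA, hB]
      have hx : x = 0 ∨ x = 1 := by fin_cases x <;> simp
      rcases hx with rfl | rfl
      · simp only [if_true, hR]
        split_ifs <;> ring
      · simp only [one_ne_zero, if_false, hI]
        split_ifs <;> ring
    have hnn := (Finset.sum_eq_zero_iff_of_nonneg (fun l _ => ?_)).1 hz
    · exact fun l => hnn l (Finset.mem_univ _)
    · refine mul_nonneg (mul_nonneg (hp l) (hPA a x l).1) ?_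
      have f1 := form_nonneg (ρ l) (hρ l).1 s c 1 0
      have f2 := form_nonneg (ρ l) (hρ l).1 s c (-1) 0
      have f3 := form_nonneg (ρ l) (hρ l).1 s c 0 1
      have f4 := form_nonneg (ρ l) (hρ l).1 s c 0 (-1)
      split_ifs <;> nlinarith
  have hex : ∀ x l, ∃ a, PA a x l ≠ 0 := by
    intro x l
    by_contra! h
    have := hPA1 x l
    simp [h] at this
  have hfin : ∀ l, p l * (ρ l (0,0) (0,0)).re = 0 := by
    intro l
    by_cases hl : p l = 0
    · simp [hl]
    obtain ⟨a, ha⟩ := hex 0 l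
    obtain ⟨b, hb⟩ := hex 1 l
    have k1 := (mul_eq_zero.1 (key a 0 l)).resolve_left (mul_ne_zero hl ha)
    have k2 := (mul_eq_zero.1 (key b 1 l)).resolve_left (mul_ne_zero hl hb)
    simp only [if_true, one_ne_zero, if_false] at k1 k2
    have fA := form_nonneg (ρ l) (hρ l).1 1 0 0 0
    have fB := form_nonneg (ρ l) (hρ l).1 0 1 1 0
    have f := form_nonneg (ρ l) (hρ l).1 s c (-(3/5) * (if a = 0 then 1 else -1))
      ((4/5) * (if b = 0 then 1 else -1))
    have q1 : 0 ≤ (ρ l (0,0) (0,0)).re := by linarith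
    have q2 : 0 ≤ c ^ 2 * (ρ l (1,1) (1,1)).re := mul_nonneg (sq_nonneg _) (by linarith)
    have q3 : s ^ 2 * (ρ l (0,0) (0,0)).re ≤ 0 := by
      split_ifs at k1 k2 f <;> linarith
    have q4 : (ρ l (0,0) (0,0)).re ≤ 0 := by
      by_contra! h
      have : 0 < s ^ 2 * (ρ l (0,0) (0,0)).re := by positivity
      linarith
    rw [le_antisymm q4 q1, mul_zero]
  have h0 := hA 0 0
  rw [Finset.sum_eq_zero (fun l _ => by rw [mul_right_comm, hfin l, zero_mul])] at h0
  have : 0 < c ^ 2 := by positivity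
  linarith


end Paper
end
end

section
/- Let c₀, c₁ > 0 with c₀² + c₁² < 1 and let |ψ_W⟩ = c₀|001⟩ + c₁|010⟩ + √(1−c₀²−c₁²)|100⟩ be a pure W-class state. Let Alice measure X₀ = σx, X₁ = σy, and define the unnormalized conditional states on the Bob–Charlie pair σ^{BC}_{a|X_x} = Tr_A[(Π_{a|X_x} ⊗ I₄) |ψ_W⟩⟨ψ_W|] (partial trace over the first qubit). Then there exist no n ∈ ℕ, weights p : Fin n → ℝ with p(λ) ≥ 0 and Σ_λ p(λ) = 1, two-qubit density matrices ρ^{BC}_λ (4×4 positive semidefinite, trace 1), and numbers P_A(a|x,λ) ∈ [0,1] with Σ_a P_A(a|x,λ) = 1, such that σ^{BC}_{a|X_x} = Σ_λ p(λ)·P_A(a|x,λ)·ρ^{BC}_λ for all a, x ∈ {0,1}. -/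
open Matrix Complex
open scoped Matrix Kronecker ComplexOrder

noncomputable section
namespace Paper

/-- The pure W-class state `c₀|001⟩ + c₁|010⟩ + √(1−c₀²−c₁²)|100⟩`. -/
def wState (c0 c1 : ℝ) : Fin 2 × Fin 2 × Fin 2 → ℂ := fun i =>
  if i = (0, 0, 1) then (c0 : ℂ) else if i = (0, 1, 0) then (c1 : ℂ)
  else if i = (1, 0, 0) then (Real.sqrt (1 - c0 ^ 2 - c1 ^ 2) : ℂ) else 0

/-- Relative phase of the conditional vector. -/
def zph (a x : Fin 2) : ℂ :=
  if x = 0 then (if a = 0 then 1 else -1) else (if a = 0 then -Complex.I else Complex.I)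

/-- Unnormalized conditional vector on the pair. -/
def phi (c0 c1 s : ℝ) (z : ℂ) : Fin 2 × Fin 2 → ℂ := fun i =>
  if i = (0, 0) then s * z else if i = (0, 1) then c0 else if i = (1, 0) then c1 else 0

lemma cond_eq (c0 c1 : ℝ) (a x : Fin 2) :
    condStateBC (outer (wState c0 c1)) (XA x) a
      = (2 : ℂ)⁻¹ • outer (phi c0 c1 (Real.sqrt (1 - c0 ^ 2 - c1 ^ 2)) (zph a x)) := by
  generalize hs : Real.sqrt (1 - c0 ^ 2 - c1 ^ 2) = s
  ext ⟨i1, i2⟩ ⟨j1, j2⟩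
  simp only [condStateBC, trA3, Matrix.of_apply, Matrix.mul_apply, Fintype.sum_prod_type,
    Fin.sum_univ_two, Matrix.kroneckerMap_apply, outer, wState, hs, Proj, XA, phi, zph,
    Matrix.smul_apply, Matrix.add_apply, smul_eq_mul]
  fin_cases a <;> fin_cases x <;> fin_cases i1 <;> fin_cases i2 <;> fin_cases j1 <;>
    fin_cases j2 <;> simp [sx, sy, Matrix.one_apply] <;> (try ring_nf) <;> (try simp) <;> (try ring)

lemma kills {n : ℕ} (q : Fin n → ℝ) (ρ : Fin n → Matrix (Fin 2 × Fin 2) (Fin 2 × Fin 2) ℂ)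
    (hq : ∀ l, 0 ≤ q l) (hρ : ∀ l, (ρ l).PosSemidef) (f w : Fin 2 × Fin 2 → ℂ)
    (h : (2 : ℂ)⁻¹ • outer f = ∑ l, ((q l : ℝ) : ℂ) • ρ l)
    (hw : ∑ j, star (f j) * w j = 0) (l : Fin n) (hl : 0 < q l) : ρ l *ᵥ w = 0 := by
  have h0 : ((2 : ℂ)⁻¹ • outer f) *ᵥ w = 0 := by
    ext i
    simp only [Matrix.mulVec, dotProduct, Matrix.smul_apply, outer, Matrix.of_apply, smul_eq_mul,
      Pi.zero_apply]
    rw [← mul_zero ((2 : ℂ)⁻¹ * f i), ← hw, Finset.mul_sum]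
    exact Finset.sum_congr rfl fun j _ => by ring
  rw [h, Matrix.sum_mulVec] at h0
  have h1 : ∑ k, (q k : ℂ) * (star w ⬝ᵥ (ρ k *ᵥ w)) = 0 := by
    have := congrArg (fun v => star w ⬝ᵥ v) h0
    simpa [dotProduct_sum, Matrix.smul_mulVec, dotProduct_smul] using this
  have h2 := (Finset.sum_eq_zero_iff_of_nonneg (fun k _ => mul_nonneg
    (by exact_mod_cast hq k) ((hρ k).dotProduct_mulVec_nonneg w))).1 h1 l (Finset.mem_univ l)
  rw [← (hρ l).dotProduct_mulVec_zero_iff]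
  rcases mul_eq_zero.1 h2 with h3 | h3
  · exact absurd (by exact_mod_cast h3) hl.ne'
  · exact h3

/-- the assemblage on the Bob–Charlie pair prepared from a pure W-class state by
Alice's measurements `σx, σy` admits no LHS-type decomposition. -/
theorem stmt6 (c0 c1 : ℝ) (hc0 : 0 < c0) (hc1 : 0 < c1) (hsum : c0 ^ 2 + c1 ^ 2 < 1) :
    ¬ ∃ (n : ℕ) (p : Fin n → ℝ) (ρBC : Fin n → Matrix (Fin 2 × Fin 2) (Fin 2 × Fin 2) ℂ)
      (PA : Fin 2 → Fin 2 → Fin n → ℝ),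
      (∀ l, 0 ≤ p l) ∧ (∑ l, p l) = 1 ∧
      (∀ l, (ρBC l).PosSemidef ∧ (ρBC l).trace = 1) ∧
      (∀ a x l, 0 ≤ PA a x l ∧ PA a x l ≤ 1) ∧
      (∀ x l, ∑ a, PA a x l = 1) ∧
      (∀ a x, condStateBC (outer (wState c0 c1)) (XA x) a
        = ∑ l, ((p l * PA a x l : ℝ) : ℂ) • ρBC l) := by
  rintro ⟨n, p, ρ, PA, hp, hp1, hρ, hPA, hPA1, h⟩
  have hs : 0 < Real.sqrt (1 - c0 ^ 2 - c1 ^ 2) := Real.sqrt_pos.2 (by linarith)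
  simp only [cond_eq] at h
  generalize Real.sqrt (1 - c0 ^ 2 - c1 ^ 2) = s at hs h
  obtain ⟨l, hl⟩ : ∃ l, 0 < p l := by
    by_contra! hcon
    have : ∑ l, p l ≤ 0 := Finset.sum_nonpos fun l _ => hcon l
    linarith
  have key : ∀ x, ∃ a, 0 < p l * PA a x l := by
    intro x
    have h1 := hPA1 x l
    rw [Fin.sum_univ_two] at h1
    by_cases h0 : 0 < PA 0 x l
    · exact ⟨0, mul_pos hl h0⟩
    · exact ⟨1, mul_pos hl (by linarith)⟩
  obtain ⟨a, ha⟩ := key 0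
  obtain ⟨b, hb⟩ := key 1
  have K : ∀ a x, 0 < p l * PA a x l → ∀ w : Fin 2 × Fin 2 → ℂ,
      ∑ j, star (phi c0 c1 s (zph a x) j) * w j = 0 → ρ l *ᵥ w = 0 := fun a x hax w hw =>
    kills (fun l => p l * PA a x l) ρ (fun l => mul_nonneg (hp l) (hPA a x l).1)
      (fun l => (hρ l).1) _ w (h a x) hw l hax
  have hzz : ∀ a x, star (zph a x) * zph a x = 1 := by
    intro a x
    fin_cases a <;> fin_cases x <;> simp [zph]
  have E1 : ∀ a x, 0 < p l * PA a x l → ∀ i,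
      ρ l i (0, 1) * s = ρ l i (0, 0) * (zph a x * c0) := by
    intro a x hax i
    have hz := hzz a x
    have := congrFun (K a x hax (fun j => if j = (0, 0) then - (zph a x * c0)
      else if j = (0, 1) then s else 0) (by
        simp [phi, Fintype.sum_prod_type] at hz ⊢
        linear_combination (-(s : ℂ) * c0) * hz)) i
    simp [Matrix.mulVec, dotProduct, Fintype.sum_prod_type] at this
    linear_combination this
  have E2 : ∀ a x, 0 < p l * PA a x l → ∀ i,
      ρ l i (1, 0) * s = ρ l i (0, 0) * (zph a x * c1) := by
    intro a x hax i
    have hz := hzz a x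
    have := congrFun (K a x hax (fun j => if j = (0, 0) then - (zph a x * c1)
      else if j = (1, 0) then s else 0) (by
        simp [phi, Fintype.sum_prod_type] at hz ⊢
        linear_combination (-(s : ℂ) * c1) * hz)) i
    simp [Matrix.mulVec, dotProduct, Fintype.sum_prod_type] at this
    linear_combination this
  have E3 : ∀ i, ρ l i (1, 1) = 0 := by
    intro i
    have := congrFun (K a 0 ha (fun j => if j = (1, 1) then 1 else 0) (by
        simp [phi, Fintype.sum_prod_type])) i
    simpa [Matrix.mulVec, dotProduct, Fintype.sum_prod_type] using this
  have hne : zph a 0 - zph b 1 ≠ 0 := by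
    intro h0
    have := congrArg Complex.re h0
    fin_cases a <;> fin_cases b <;> simp [zph] at this
  have hs' : (s : ℂ) ≠ 0 := by exact_mod_cast hs.ne'
  have hc0' : (c0 : ℂ) ≠ 0 := by exact_mod_cast hc0.ne'
  have Z : ∀ i, ρ l i (0, 0) = 0 := by
    intro i
    have : ρ l i (0, 0) * ((zph a 0 - zph b 1) * c0) = 0 := by
      linear_combination E1 b 1 hb i - E1 a 0 ha i
    exact (mul_eq_zero.1 this).resolve_right (mul_ne_zero hne hc0')
  have Z1 : ∀ i, ρ l i (0, 1) = 0 := by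
    intro i
    have := E1 a 0 ha i
    rw [Z, zero_mul] at this
    exact (mul_eq_zero.1 this).resolve_right hs'
  have Z2 : ∀ i, ρ l i (1, 0) = 0 := by
    intro i
    have := E2 a 0 ha i
    rw [Z, zero_mul] at this
    exact (mul_eq_zero.1 this).resolve_right hs'
  have ht := (hρ l).2
  simp [Matrix.trace, Fintype.sum_prod_type, Z, Z1, Z2, E3] at ht

end Paper
end
end

section
/- Let c₀, c₁ > 0 with c₀² + c₁² < 1 and let |ψ_W⟩ = c₀|001⟩ + c₁|010⟩ + √(1−c₀²−c₁²)|100⟩ be a pure W-class state. Let Alice measure X₀ = σx, X₁ = σy and Bob measure Y₀ = (σx+σz)/√2, Y₁ = (σy+σz)/√2. Then the assemblage of Charlie's unnormalized conditional states σ^C_{a,b|X_x,Y_y} = Tr_{AB}[(Π_{a|X_x} ⊗ Π_{b|Y_y} ⊗ I₂) |ψ_W⟩⟨ψ_W|] admits no local-hidden-state (LHS) model. -/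
open Matrix Complex
open scoped Matrix Kronecker ComplexOrder

noncomputable section
namespace Paper

/-- The quadratic form of Charlie's conditional state vanishes on the orthogonal vector. -/
lemma aux_quad (c0 c1 : ℝ) (α q t : ℂ) (hα : α * star α = 1) (ht : star t = t)
    (X Y : Matrix (Fin 2) (Fin 2) ℂ) (a b : Fin 2)
    (hX : Proj a X = (2 : ℂ)⁻¹ • !![1, star α; α, 1])
    (hY : Proj b Y = q • !![1, t; t, t ^ 2]) :
    star ![(c0 : ℂ), -(c1 * t + (Real.sqrt (1 - c0 ^ 2 - c1 ^ 2) : ℂ) * α)] ⬝ᵥ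
      (condState (outer (wState c0 c1)) X Y a b *ᵥ
        ![(c0 : ℂ), -(c1 * t + (Real.sqrt (1 - c0 ^ 2 - c1 ^ 2) : ℂ) * α)]) = 0 := by
  unfold condState
  rw [hX, hY]
  have ht' : (starRingEnd ℂ) t = t := ht
  have hα' : α * (starRingEnd ℂ) α = 1 := hα
  simp [trAB, outer, wState, Matrix.mul_apply, Fintype.sum_prod_type, Fin.sum_univ_two,
    Matrix.mulVec, dotProduct, Matrix.one_apply, ht']
  linear_combination (-(c0 : ℂ) ^ 2 * q * (Real.sqrt (1 - c0 ^ 2 - c1 ^ 2) : ℂ) ^ 2 / 2) * hα'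

lemma aux_X (a x : Fin 2) : ∃ α : ℂ, α * star α = 1 ∧
    Proj a (XA x) = (2 : ℂ)⁻¹ • !![1, star α; α, 1] ∧
    ((x = 0 ∧ α.im = 0) ∨ (x = 1 ∧ α.re = 0)) := by
  fin_cases a <;> fin_cases x
  · refine ⟨1, by simp, ?_, by simp⟩
    ext i j; fin_cases i <;> fin_cases j <;> simp [Proj, XA, sx, sy]
  · refine ⟨I, by simp, ?_, by simp⟩
    ext i j; fin_cases i <;> fin_cases j <;> simp [Proj, XA, sx, sy]
  · refine ⟨-1, by simp, ?_, by simp⟩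
    ext i j; fin_cases i <;> fin_cases j <;> simp [Proj, XA, sx, sy]
  · refine ⟨-I, by simp, ?_, by simp⟩
    ext i j; fin_cases i <;> fin_cases j <;> simp [Proj, XA, sx, sy]

lemma aux_Y (b : Fin 2) : ∃ q t : ℂ, star t = t ∧
    Proj b (YB 0) = q • !![1, t; t, t ^ 2] := by
  have h2 : ((Real.sqrt 2 : ℝ) : ℂ) ^ 2 = 2 := by
    rw [← Complex.ofReal_pow, Real.sq_sqrt (by norm_num)]; simp
  have h0 : ((Real.sqrt 2 : ℝ) : ℂ) ≠ 0 := by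
    intro h; rw [h] at h2; norm_num at h2
  have hi : ((Real.sqrt 2 : ℝ) : ℂ)⁻¹ = ((Real.sqrt 2 : ℝ) : ℂ) / 2 := by
    field_simp; exact h2.symm
  fin_cases b
  · refine ⟨(1 + (Real.sqrt 2 : ℂ) / 2) / 2, (Real.sqrt 2 : ℂ) - 1, by simp, ?_⟩
    ext i j
    fin_cases i <;> fin_cases j <;> simp [Proj, YB, sx, sz, hi] <;> grind
  · refine ⟨(1 - (Real.sqrt 2 : ℂ) / 2) / 2, -(Real.sqrt 2 : ℂ) - 1, by simp, ?_⟩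
    ext i j
    fin_cases i <;> fin_cases j <;> simp [Proj, YB, sx, sz, hi] <;> grind

/-- If a nonnegative combination of positive semidefinite matrices annihilates `v` in quadratic
form, so does each member of positive weight. -/
lemma aux_psd {n : ℕ} (w : Fin n → ℝ) (ρ : Fin n → Matrix (Fin 2) (Fin 2) ℂ)
    (hw : ∀ l, 0 ≤ w l) (hρ : ∀ l, (ρ l).PosSemidef) (v : Fin 2 → ℂ)
    (h : star v ⬝ᵥ ((∑ l, ((w l : ℝ) : ℂ) • ρ l) *ᵥ v) = 0) (l : Fin n) (hl : 0 < w l) :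
    ρ l *ᵥ v = 0 := by
  rw [← (hρ l).dotProduct_mulVec_zero_iff]
  have h1 : ∑ l, ((w l : ℝ) : ℂ) * (star v ⬝ᵥ (ρ l *ᵥ v)) = 0 := by
    rw [← h, Matrix.sum_mulVec, dotProduct_sum]
    refine Finset.sum_congr rfl fun l _ => ?_
    rw [Matrix.smul_mulVec, dotProduct_smul, smul_eq_mul]
  have h2 := (Finset.sum_eq_zero_iff_of_nonneg (fun l _ =>
    mul_nonneg (by exact_mod_cast hw l) ((hρ l).dotProduct_mulVec_nonneg v))).1 h1 l
      (Finset.mem_univ l)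
  rcases mul_eq_zero.1 h2 with h3 | h3
  · exact absurd (by exact_mod_cast h3) hl.ne'
  · exact h3

lemma aux_pos (P : Fin 2 → ℝ) (h : ∑ a, P a = 1) (h0 : ∀ a, 0 ≤ P a) : ∃ a, 0 < P a := by
  by_contra! hc
  have := Finset.sum_nonpos (fun a (_ : a ∈ Finset.univ) => hc a)
  linarith

/-- the assemblage prepared on Charlie's qubit from a pure W-class state by
Alice's measurements `σx, σy` and Bob's measurements `(σx+σz)/√2, (σy+σz)/√2` admits no LHS
model. -/
theorem stmt7 (c0 c1 : ℝ) (hc0 : 0 < c0) (hc1 : 0 < c1) (hsum : c0 ^ 2 + c1 ^ 2 < 1) :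
    ¬ HasLHS (fun a b x y => condState (outer (wState c0 c1)) (XA x) (YB y) a b) := by
  rintro ⟨n, p, ρh, PA, PB, hp, hp1, hρ, hA, hB, hA1, hB1, hσ⟩
  obtain ⟨l, hl⟩ : ∃ l, 0 < p l := by
    by_contra! hc
    have := Finset.sum_nonpos (fun a (_ : a ∈ Finset.univ) => hc a)
    linarith
  obtain ⟨b, hb⟩ := aux_pos (fun b => PB b 0 l) (hB1 0 l) (fun b => (hB b 0 l).1)
  obtain ⟨q, t, ht, hY⟩ := aux_Y b
  have key : ∀ x : Fin 2, ∃ α : ℂ, α * star α = 1 ∧ ((x = 0 ∧ α.im = 0) ∨ (x = 1 ∧ α.re = 0)) ∧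
      ρh l *ᵥ ![(c0 : ℂ), -(c1 * t + (Real.sqrt (1 - c0 ^ 2 - c1 ^ 2) : ℂ) * α)] = 0 := by
    intro x
    obtain ⟨a, ha⟩ := aux_pos (fun a => PA a x l) (hA1 x l) (fun a => (hA a x l).1)
    obtain ⟨α, hα, hX, hx⟩ := aux_X a x
    refine ⟨α, hα, hx, ?_⟩
    have hq := aux_quad c0 c1 α q t hα ht _ _ a b hX hY
    have hs := hσ a b x 0
    beta_reduce at hs
    rw [hs] at hq
    exact aux_psd (fun l => p l * PA a x l * PB b 0 l) ρh
      (fun l => mul_nonneg (mul_nonneg (hp l) (hA a x l).1) (hB b 0 l).1)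
      (fun l => (hρ l).1) _ hq l (mul_pos (mul_pos hl ha) hb)
  obtain ⟨α, hα, hx, h1⟩ := key 0
  obtain ⟨β, hβ, hy, h2⟩ := key 1
  have hc2 : (Real.sqrt (1 - c0 ^ 2 - c1 ^ 2) : ℂ) ≠ 0 := by
    have : 0 < Real.sqrt (1 - c0 ^ 2 - c1 ^ 2) := Real.sqrt_pos.2 (by linarith)
    exact_mod_cast this.ne'
  have hne : α - β ≠ 0 := by
    intro h
    have h : α = β := sub_eq_zero.1 h
    subst h
    simp at hx hy
    have : α = 0 := Complex.ext hy hx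
    simp [this] at hα
  have hc0' : (c0 : ℂ) ≠ 0 := by exact_mod_cast hc0.ne'
  have hcol : ∀ i, ρh l i 1 = 0 ∧ ρh l i 0 = 0 := by
    intro i
    have e1 := congrFun h1 i
    have e2 := congrFun h2 i
    simp only [Matrix.mulVec, dotProduct, Fin.sum_univ_two, Matrix.cons_val_zero,
      Matrix.cons_val_one, Pi.zero_apply] at e1 e2
    have e3 : ρh l i 1 = 0 := by
      have : ρh l i 1 * ((Real.sqrt (1 - c0 ^ 2 - c1 ^ 2) : ℂ) * (α - β)) = 0 := by
        linear_combination e2 - e1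
      exact (mul_eq_zero.1 this).resolve_right (mul_ne_zero hc2 hne)
    refine ⟨e3, ?_⟩
    rw [e3] at e1
    simpa [hc0'] using e1
  have htr := (hρ l).2
  rw [Matrix.trace_fin_two, (hcol 0).2, (hcol 1).1] at htr
  simp at htr

end Paper
end
end

section
/- Let ρ be a qubit density matrix and let {Π_{c|0}}_{c∈{0,1}} and {Π_{c|1}}_{c∈{0,1}} be two mutually unbiased rank-one projective qubit measurements. Then for all outcomes c, c' ∈ {0,1}: Tr(Π_{c|0} ρ) + Tr(Π_{c'|1} ρ) ≤ 1 + 1/√2. -/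
open Matrix Complex
open scoped Matrix Kronecker ComplexOrder

noncomputable section
namespace Paper

/-- Bloch parametrization of a Hermitian trace-one qubit matrix. -/
theorem bloch_exists (A : Matrix (Fin 2) (Fin 2) ℂ) (hA : A.IsHermitian) (ht : A.trace = 1) :
    ∃ x y z : ℝ, A = !![⟨(1 + z) / 2, 0⟩, ⟨x / 2, -y / 2⟩; ⟨x / 2, y / 2⟩, ⟨(1 - z) / 2, 0⟩] := by
  have h00 := hA.apply 0 0
  have h10 := hA.apply 1 0
  have h11 := hA.apply 1 1
  rw [Matrix.trace_fin_two] at ht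
  simp only [Complex.ext_iff, Complex.star_def, Complex.conj_re, Complex.conj_im, Complex.add_re,
    Complex.add_im, Complex.one_re, Complex.one_im] at h00 h10 h11 ht
  refine ⟨2 * (A 1 0).re, 2 * (A 1 0).im, 2 * (A 0 0).re - 1, ?_⟩
  ext i j
  fin_cases i <;> fin_cases j <;> apply Complex.ext <;> simp <;> linarith [h00.2, h10.1, h10.2, h11.2, ht.1]

theorem bloch_trace (x y z a b c : ℝ) :
    (((!![⟨(1 + z) / 2, 0⟩, ⟨x / 2, -y / 2⟩; ⟨x / 2, y / 2⟩, ⟨(1 - z) / 2, 0⟩] :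
      Matrix (Fin 2) (Fin 2) ℂ) *
      (!![⟨(1 + c) / 2, 0⟩, ⟨a / 2, -b / 2⟩; ⟨a / 2, b / 2⟩, ⟨(1 - c) / 2, 0⟩] :
      Matrix (Fin 2) (Fin 2) ℂ)).trace).re
      = (1 + (x * a + y * b + z * c)) / 2 := by
  simp [Matrix.trace_fin_two, Matrix.mul_apply, Fin.sum_univ_two]
  ring

theorem bloch_det (x y z : ℝ) :
    ((!![⟨(1 + z) / 2, 0⟩, ⟨x / 2, -y / 2⟩; ⟨x / 2, y / 2⟩, ⟨(1 - z) / 2, 0⟩] :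
      Matrix (Fin 2) (Fin 2) ℂ).det).re = (1 - (x * x + y * y + z * z)) / 4 := by
  simp [Matrix.det_fin_two]
  ring

/-- the fine-grained uncertainty relation for two mutually unbiased rank-one
projective qubit measurements: `Tr(Π_{c|0} ρ) + Tr(Π_{c'|1} ρ) ≤ 1 + 1/√2`. -/
theorem stmt9 (ρ : Matrix (Fin 2) (Fin 2) ℂ) (hρ : ρ.PosSemidef) (htr : ρ.trace = 1)
    (Pr : Fin 2 → Fin 2 → Matrix (Fin 2) (Fin 2) ℂ)
    (hherm : ∀ c m, (Pr c m).IsHermitian)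
    (hidem : ∀ c m, Pr c m * Pr c m = Pr c m)
    (hrank : ∀ c m, (Pr c m).trace = 1)
    (hsum : ∀ m, Pr 0 m + Pr 1 m = 1)
    (hmub : ∀ c c', (Pr c 0 * Pr c' 1).trace = 1 / 2) :
    ∀ c c' : Fin 2, ((Pr c 0 * ρ).trace).re + ((Pr c' 1 * ρ).trace).re ≤ 1 + 1 / Real.sqrt 2 := by
  intro c c'
  obtain ⟨r1, r2, r3, hr⟩ := bloch_exists ρ hρ.isHermitian htr
  obtain ⟨a1, a2, a3, ha⟩ := bloch_exists _ (hherm c 0) (hrank c 0)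
  obtain ⟨b1, b2, b3, hb⟩ := bloch_exists _ (hherm c' 1) (hrank c' 1)
  have hd : 0 ≤ ρ.det.re := (Complex.le_def.1 hρ.det_nonneg).1
  have hA : ((Pr c 0 * Pr c 0).trace).re = 1 := by rw [hidem, hrank]; simp
  have hB : ((Pr c' 1 * Pr c' 1).trace).re = 1 := by rw [hidem, hrank]; simp
  have hAB : ((Pr c 0 * Pr c' 1).trace).re = 1 / 2 := by rw [hmub]; norm_num
  rw [hr, bloch_det] at hd
  rw [ha, bloch_trace] at hA
  rw [hb, bloch_trace] at hB
  rw [ha, hb, bloch_trace] at hAB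
  rw [ha, hb, hr, bloch_trace, bloch_trace]
  have hn : (a1 + b1) ^ 2 + (a2 + b2) ^ 2 + (a3 + b3) ^ 2 = 2 := by linarith
  have hcs : ((a1 + b1) * r1 + (a2 + b2) * r2 + (a3 + b3) * r3) ^ 2
      ≤ ((a1 + b1) ^ 2 + (a2 + b2) ^ 2 + (a3 + b3) ^ 2) * (r1 ^ 2 + r2 ^ 2 + r3 ^ 2) := by
    linarith [sq_nonneg ((a1 + b1) * r2 - (a2 + b2) * r1),
      sq_nonneg ((a1 + b1) * r3 - (a3 + b3) * r1), sq_nonneg ((a2 + b2) * r3 - (a3 + b3) * r2)]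
  rw [hn] at hcs
  have hle : (a1 + b1) * r1 + (a2 + b2) * r2 + (a3 + b3) * r3 ≤ Real.sqrt 2 :=
    Real.le_sqrt_of_sq_le (by linarith)
  have hs : 1 / Real.sqrt 2 = Real.sqrt 2 / 2 := by
    rw [Real.sqrt_div_self']
  rw [hs]
  linarith

end Paper
end
end

section
/- Let θ ∈ (0, π/2) and let |ψ(θ)⟩ = cos θ·|000⟩ + sin θ·|111⟩ be the generalized GHZ state. With the observables X₀ = σx, X₁ = σy (Alice), Y₀ = sin 2θ·σx + cos 2θ·σz, Y₁ = cos 2θ·σz + sin 2θ·σy (Bob), and Z₀ = σx, Z₁ = σy (Charlie), each of the four conditional probabilities P(0_{Z₀}|1_{X₀}1_{Y₀}), P(0_{Z₀}|0_{X₁}1_{Y₁}), P(0_{Z₁}|0_{X₀}1_{Y₁}), P(0_{Z₁}|0_{X₁}1_{Y₀}) is well defined and equals 1; consequently CP = 4, the algebraic maximum. -/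
open Matrix Complex
open scoped Matrix Kronecker ComplexOrder

noncomputable section
namespace Paper

/-- Bob's tilted observables `Y₀ = sin 2θ·σx + cos 2θ·σz`, `Y₁ = cos 2θ·σz + sin 2θ·σy`. -/
def YBt (θ : ℝ) : Fin 2 → Matrix (Fin 2) (Fin 2) ℂ := fun y =>
  if y = 0 then (Real.sin (2 * θ) : ℂ) • sx + (Real.cos (2 * θ) : ℂ) • sz
  else (Real.cos (2 * θ) : ℂ) • sz + (Real.sin (2 * θ) : ℂ) • sy

/-- Amplitude of the generalized GHZ state on `|jjj⟩`. -/
def amp (θ : ℝ) (j : Fin 2) : ℂ := if j = 0 then (Real.cos θ : ℂ) else (Real.sin θ : ℂ)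

theorem condState_ggHZ (θ : ℝ) (X Y : Matrix (Fin 2) (Fin 2) ℂ) (a b i j : Fin 2) :
    condState (outer (ggHZ θ)) X Y a b i j =
      Proj a X j i * Proj b Y j i * amp θ i * amp θ j := by
  unfold condState
  generalize Proj a X = P
  generalize Proj b Y = Q
  fin_cases i <;> fin_cases j <;>
    simp [trAB, Matrix.mul_apply, Fintype.sum_prod_type, outer, ggHZ, amp,
      Matrix.one_apply, -Complex.ofReal_cos, -Complex.ofReal_sin] <;> ring

theorem values (θ : ℝ) (hθ : 0 < θ) (hθ' : θ < Real.pi / 2) (X Y Z : Matrix (Fin 2) (Fin 2) ℂ)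
    (a b : Fin 2)
    (h00 : Proj a X 0 0 * Proj b Y 0 0 = (Real.sin θ : ℂ) ^ 2 / 2)
    (h11 : Proj a X 1 1 * Proj b Y 1 1 = (Real.cos θ : ℂ) ^ 2 / 2)
    (hZ : Z 0 0 = 0 ∧ Z 1 1 = 0)
    (hod : Z 0 1 * (Proj a X 0 1 * Proj b Y 0 1) +
      Z 1 0 * (Proj a X 1 0 * Proj b Y 1 0) = (Real.sin θ : ℂ) * Real.cos θ) :
    0 < ((condState (outer (ggHZ θ)) X Y a b).trace).re ∧
    condProb Z (condState (outer (ggHZ θ)) X Y a b) 0 = 1 := by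
  have hs : 0 < Real.sin θ := Real.sin_pos_of_pos_of_lt_pi hθ (by linarith [Real.pi_pos])
  have hc : 0 < Real.cos θ := Real.cos_pos_of_mem_Ioo ⟨by linarith, hθ'⟩
  have ht : (condState (outer (ggHZ θ)) X Y a b).trace
      = ((Real.sin θ ^ 2 * Real.cos θ ^ 2 : ℝ) : ℂ) := by
    rw [Matrix.trace_fin_two, condState_ggHZ, condState_ggHZ, h00, h11]
    simp only [amp, if_true, one_ne_zero, if_false]
    push_cast
    ring
  have hp : (Proj 0 Z * condState (outer (ggHZ θ)) X Y a b).trace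
      = ((Real.sin θ ^ 2 * Real.cos θ ^ 2 : ℝ) : ℂ) := by
    rw [Matrix.trace_fin_two, Matrix.mul_apply, Matrix.mul_apply]
    simp only [Fin.sum_univ_two, condState_ggHZ, h00, h11]
    have e00 : Proj 0 Z 0 0 = 1 / 2 := by simp [Proj, hZ.1]
    have e11 : Proj 0 Z 1 1 = 1 / 2 := by simp [Proj, hZ.2]
    have e01 : Proj 0 Z 0 1 = Z 0 1 / 2 := by simp [Proj]; ring
    have e10 : Proj 0 Z 1 0 = Z 1 0 / 2 := by simp [Proj]; ring
    rw [e00, e11, e01, e10]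
    simp only [amp, if_true, one_ne_zero, if_false]
    push_cast [-Complex.ofReal_cos, -Complex.ofReal_sin]
    linear_combination ((Real.sin θ : ℂ) * Real.cos θ / 2) * hod
  have hpos : 0 < Real.sin θ ^ 2 * Real.cos θ ^ 2 := by positivity
  unfold condProb
  rw [hp, ht, Complex.ofReal_re]
  exact ⟨hpos, div_self hpos.ne'⟩

/-- the generalized GHZ state attains the algebraic maximum `CP = 4` for the
observables `X₀ = σx, X₁ = σy`, `Y₀ = sin 2θ·σx + cos 2θ·σz, Y₁ = cos 2θ·σz + sin 2θ·σy`,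
`Z₀ = σx, Z₁ = σy`: each of the four conditional probabilities is well defined and equals 1. -/
theorem stmt10 (θ : ℝ) (hθ : 0 < θ) (hθ' : θ < Real.pi / 2) :
    PosEvents (outer (ggHZ θ)) (XA 0) (XA 1) (YBt θ 0) (YBt θ 1) ∧
    condProb sx (condState (outer (ggHZ θ)) (XA 0) (YBt θ 0) 1 1) 0 = 1 ∧
    condProb sx (condState (outer (ggHZ θ)) (XA 1) (YBt θ 1) 0 1) 0 = 1 ∧
    condProb sy (condState (outer (ggHZ θ)) (XA 0) (YBt θ 1) 0 1) 0 = 1 ∧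
    condProb sy (condState (outer (ggHZ θ)) (XA 1) (YBt θ 0) 0 1) 0 = 1 ∧
    CP (outer (ggHZ θ)) (XA 0) (XA 1) (YBt θ 0) (YBt θ 1) = 4 := by
  have hsc : (Real.sin θ : ℂ) ^ 2 + (Real.cos θ : ℂ) ^ 2 = 1 := by
    exact_mod_cast Real.sin_sq_add_cos_sq θ
  have h2s : (Real.sin (2 * θ) : ℂ) = 2 * Real.sin θ * Real.cos θ := by
    rw [Real.sin_two_mul]; push_cast; ring
  have h2c : (Real.cos (2 * θ) : ℂ) = (Real.cos θ : ℂ) ^ 2 - (Real.sin θ : ℂ) ^ 2 := by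
    rw [Real.cos_two_mul']; push_cast; ring
  have hI := Complex.I_mul_I
  have A := values θ hθ hθ' (XA 0) (YBt θ 0) sx 1 1
  have B := values θ hθ hθ' (XA 1) (YBt θ 1) sx 0 1
  have C := values θ hθ hθ' (XA 0) (YBt θ 1) sy 0 1
  have D := values θ hθ hθ' (XA 1) (YBt θ 0) sy 0 1
  simp only [Proj, XA, YBt, h2s, h2c] at A B C D ⊢
  generalize hS : (Real.sin θ : ℂ) = S at *
  generalize hK : (Real.cos θ : ℂ) = K at *
  have A' := A (by simp [sx, sz]; linear_combination (-1/4) * hsc)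
    (by simp [sx, sz]; linear_combination (-1/4) * hsc)
    (by simp [sx]) (by simp [sx, sz]; ring)
  have B' := B (by simp [sx, sy, sz]; linear_combination (-1/4) * hsc)
    (by simp [sx, sy, sz]; linear_combination (-1/4) * hsc)
    (by simp [sx]) (by simp [sx, sy, sz]; linear_combination (-S * K) * hI)
  have C' := C (by simp [sx, sy, sz]; linear_combination (-1/4) * hsc)
    (by simp [sx, sy, sz]; linear_combination (-1/4) * hsc)
    (by simp [sy]) (by simp [sx, sy, sz]; linear_combination (-S * K) * hI)
  have D' := D (by simp [sx, sy, sz]; linear_combination (-1/4) * hsc)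
    (by simp [sx, sy, sz]; linear_combination (-1/4) * hsc)
    (by simp [sy]) (by simp [sx, sy, sz]; linear_combination (-S * K) * hI)
  refine ⟨⟨A'.1, B'.1, C'.1, D'.1⟩, A'.2, B'.2, C'.2, D'.2, ?_⟩
  unfold CP
  rw [A'.2, B'.2, C'.2, D'.2]
  norm_num

end Paper
end
end

section
/- Let ρ be a three-qubit density matrix, X₀, X₁, Y₀, Y₁ Hermitian qubit observables with eigenvalues ±1, Z₀ = σx, Z₁ = σy, and assume the four conditioning events in CP have positive probability. If CP = 4, then the corresponding normalized conditional states on Charlie's qubit are forced to be Pauli eigenprojectors: ϱ^C_{1,1|X₀,Y₀} = (I+σx)/2, ϱ^C_{0,1|X₁,Y₁} = (I+σx)/2, ϱ^C_{0,1|X₀,Y₁} = (I+σy)/2, and ϱ^C_{0,1|X₁,Y₀} = (I+σy)/2. -/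
open Matrix Complex
open scoped Matrix Kronecker ComplexOrder

noncomputable section
namespace Paper

/-- The normalized conditional state `ϱ = σ / Tr σ`. -/
def normState (σ : Matrix (Fin 2) (Fin 2) ℂ) : Matrix (Fin 2) (Fin 2) ℂ := (σ.trace)⁻¹ • σ

lemma trAB_comm (P Q : Matrix (Fin 2) (Fin 2) ℂ)
    (M : Matrix (Fin 2 × Fin 2 × Fin 2) (Fin 2 × Fin 2 × Fin 2) ℂ) :
    trAB ((P ⊗ₖ (Q ⊗ₖ (1 : Matrix (Fin 2) (Fin 2) ℂ))) * M) =
    trAB (M * (P ⊗ₖ (Q ⊗ₖ (1 : Matrix (Fin 2) (Fin 2) ℂ)))) := by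
  ext i j
  simp only [trAB, Matrix.of_apply, Matrix.mul_apply, Fintype.sum_prod_type,
    Matrix.kroneckerMap_apply, Matrix.one_apply, Fin.sum_univ_two]
  fin_cases i <;> fin_cases j <;> simp <;> ring

lemma trAB_posSemidef (M : Matrix (Fin 2 × Fin 2 × Fin 2) (Fin 2 × Fin 2 × Fin 2) ℂ)
    (hM : M.PosSemidef) : (trAB M).PosSemidef := by
  have h : trAB M = ∑ k : Fin 2, ∑ l : Fin 2,
      M.submatrix (fun i : Fin 2 => (k, l, i)) (fun i : Fin 2 => (k, l, i)) := by
    ext i j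
    simp [trAB, Matrix.sum_apply]
  rw [h]
  exact Matrix.posSemidef_sum _ fun k _ => Matrix.posSemidef_sum _ fun l _ => hM.submatrix _

lemma Proj_herm (a : Fin 2) (O : Matrix (Fin 2) (Fin 2) ℂ) (h : Dichotomic O) :
    (Proj a O)ᴴ = Proj a O := by
  have := h.1.eq
  unfold Proj
  split_ifs <;> simp [Matrix.conjTranspose_smul, this]

lemma Proj_idem (a : Fin 2) (O : Matrix (Fin 2) (Fin 2) ℂ) (h : Dichotomic O) :
    Proj a O * Proj a O = Proj a O := by
  have := h.2
  unfold Proj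
  split_ifs <;> simp only [smul_mul_smul_comm, add_mul, mul_add, this, one_mul, mul_one,
    neg_mul, mul_neg, neg_neg] <;> module

lemma condState_posSemidef (ρ : Matrix (Fin 2 × Fin 2 × Fin 2) (Fin 2 × Fin 2 × Fin 2) ℂ)
    (hρ : ρ.PosSemidef) (X Y : Matrix (Fin 2) (Fin 2) ℂ) (hX : Dichotomic X)
    (hY : Dichotomic Y) (a b : Fin 2) : (condState ρ X Y a b).PosSemidef := by
  unfold condState
  set K := Proj a X ⊗ₖ (Proj b Y ⊗ₖ (1 : Matrix (Fin 2) (Fin 2) ℂ)) with hK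
  have hKK : K * K = K := by
    rw [hK, ← Matrix.mul_kronecker_mul, ← Matrix.mul_kronecker_mul, Proj_idem a X hX,
      Proj_idem b Y hY, one_mul]
  have hKh : Kᴴ = K := by
    rw [hK, Matrix.conjTranspose_kronecker, Matrix.conjTranspose_kronecker, Proj_herm a X hX,
      Proj_herm b Y hY, Matrix.conjTranspose_one]
  have h1 : trAB (K * ρ) = trAB (K * ρ * Kᴴ) := by
    rw [hKh, hK, ← trAB_comm, ← hK, ← Matrix.mul_assoc, hKK]
  rw [h1]
  exact trAB_posSemidef _ (hρ.mul_mul_conjTranspose_same K)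

/-- Parametrization of a positive semidefinite qubit matrix by real numbers. -/
lemma psd_form (σ : Matrix (Fin 2) (Fin 2) ℂ) (h : σ.PosSemidef) :
    ∃ a d x y : ℝ, σ = !![(a : ℂ), x + y * Complex.I; x - y * Complex.I, (d : ℂ)] ∧
      x ^ 2 + y ^ 2 ≤ a * d := by
  have h00 := h.1.apply 0 0
  have h11 := h.1.apply 1 1
  have h10 := h.1.apply 1 0
  have hd := h.det_nonneg
  have e : σ = !![((σ 0 0).re : ℂ), (σ 0 1).re + (σ 0 1).im * Complex.I;
      (σ 0 1).re - (σ 0 1).im * Complex.I, ((σ 1 1).re : ℂ)] := by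
    ext i j
    fin_cases i <;> fin_cases j
    · exact (Complex.conj_eq_iff_re.mp h00).symm
    · simp
    · simp only [Fin.mk_one, Fin.zero_eta, ← h10]
      apply Complex.ext <;> simp
    · exact (Complex.conj_eq_iff_re.mp h11).symm
  refine ⟨(σ 0 0).re, (σ 1 1).re, (σ 0 1).re, (σ 0 1).im, e, ?_⟩
  rw [e, Matrix.det_fin_two] at hd
  have := (Complex.le_def.mp hd).1
  simp at this
  nlinarith

lemma sx_bound (σ : Matrix (Fin 2) (Fin 2) ℂ) (h : σ.PosSemidef) (ht : 0 < σ.trace.re) :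
    condProb sx σ 0 ≤ 1 ∧ (condProb sx σ 0 = 1 → normState σ = Proj 0 sx) := by
  obtain ⟨a, d, x, y, rfl, hb⟩ := psd_form σ h
  simp [Matrix.trace_fin_two] at ht
  have hc : condProb sx !![(a : ℂ), x + y * Complex.I; x - y * Complex.I, (d : ℂ)] 0
      = ((a + d) / 2 + x) / (a + d) := by
    simp [condProb, Proj, sx, Matrix.trace_fin_two, Matrix.mul_apply, Fin.sum_univ_two]
    ring
  rw [hc, div_le_one ht, div_eq_one_iff_eq ht.ne']
  constructor
  · nlinarith [sq_nonneg (a - d), sq_nonneg y]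
  · intro hx
    have hx : x = (a + d) / 2 := by linarith
    have hy : y = 0 := by
      subst hx; nlinarith [sq_nonneg (a - d), sq_nonneg y]
    have had : a = d := by
      subst hx; nlinarith [sq_nonneg (a - d), sq_nonneg y]
    subst had
    subst hy
    have hx : x = a := by linarith
    subst hx
    have hne : (x : ℂ) ≠ 0 := by
      intro h0
      have : x = 0 := by exact_mod_cast h0
      linarith
    have hne2 : (x : ℂ) + x ≠ 0 := by rw [← two_mul]; exact mul_ne_zero two_ne_zero hne
    ext i j
    fin_cases i <;> fin_cases j <;>
      simp [normState, Proj, sx, Matrix.trace_fin_two] <;> field_simp <;> ring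

lemma sy_bound (σ : Matrix (Fin 2) (Fin 2) ℂ) (h : σ.PosSemidef) (ht : 0 < σ.trace.re) :
    condProb sy σ 0 ≤ 1 ∧ (condProb sy σ 0 = 1 → normState σ = Proj 0 sy) := by
  obtain ⟨a, d, x, y, rfl, hb⟩ := psd_form σ h
  simp [Matrix.trace_fin_two] at ht
  have hc : condProb sy !![(a : ℂ), x + y * Complex.I; x - y * Complex.I, (d : ℂ)] 0
      = ((a + d) / 2 - y) / (a + d) := by
    simp [condProb, Proj, sy, Matrix.trace_fin_two, Matrix.mul_apply, Fin.sum_univ_two]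
    ring
  rw [hc, div_le_one ht, div_eq_one_iff_eq ht.ne']
  constructor
  · nlinarith [sq_nonneg (a - d), sq_nonneg x]
  · intro hy
    have hy : y = -((a + d) / 2) := by linarith
    have hx : x = 0 := by
      subst hy; nlinarith [sq_nonneg (a - d), sq_nonneg x]
    have had : a = d := by
      subst hy; nlinarith [sq_nonneg (a - d), sq_nonneg x]
    subst had
    subst hx
    have hy : y = -a := by linarith
    subst hy
    have hne : (a : ℂ) ≠ 0 := by
      intro h0
      have : a = 0 := by exact_mod_cast h0
      linarith
    have hne2 : (a : ℂ) + a ≠ 0 := by rw [← two_mul]; exact mul_ne_zero two_ne_zero hne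
    ext i j
    fin_cases i <;> fin_cases j <;>
      simp [normState, Proj, sy, Matrix.trace_fin_two] <;> field_simp <;> ring

/-- if a three-qubit density matrix attains `CP = 4`, the four relevant
normalized conditional states on Charlie's qubit are the Pauli eigenprojectors
`(I+σx)/2` and `(I+σy)/2`. -/
theorem stmt13 (ρ : Matrix (Fin 2 × Fin 2 × Fin 2) (Fin 2 × Fin 2 × Fin 2) ℂ)
    (hρ : ρ.PosSemidef) (htr : ρ.trace = 1)
    (X0 X1 Y0 Y1 : Matrix (Fin 2) (Fin 2) ℂ)
    (hX0 : Dichotomic X0) (hX1 : Dichotomic X1) (hY0 : Dichotomic Y0) (hY1 : Dichotomic Y1)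
    (hpos : PosEvents ρ X0 X1 Y0 Y1)
    (hCP : CP ρ X0 X1 Y0 Y1 = 4) :
    normState (condState ρ X0 Y0 1 1) = Proj 0 sx ∧
    normState (condState ρ X1 Y1 0 1) = Proj 0 sx ∧
    normState (condState ρ X0 Y1 0 1) = Proj 0 sy ∧
    normState (condState ρ X1 Y0 0 1) = Proj 0 sy := by
  obtain ⟨p1, p2, p3, p4⟩ := hpos
  obtain ⟨b1, c1⟩ := sx_bound _ (condState_posSemidef ρ hρ X0 Y0 hX0 hY0 1 1) p1
  obtain ⟨b2, c2⟩ := sx_bound _ (condState_posSemidef ρ hρ X1 Y1 hX1 hY1 0 1) p2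
  obtain ⟨b3, c3⟩ := sy_bound _ (condState_posSemidef ρ hρ X0 Y1 hX0 hY1 0 1) p3
  obtain ⟨b4, c4⟩ := sy_bound _ (condState_posSemidef ρ hρ X1 Y0 hX1 hY0 0 1) p4
  unfold CP at hCP
  exact ⟨c1 (by linarith), c2 (by linarith), c3 (by linarith), c4 (by linarith)⟩


end Paper
end
end

section
/- Let |ψ⟩ = |φ⟩_A ⊗ |χ⟩_{BC} be a three-qubit pure state that is a product of a qubit state |φ⟩_A and a two-qubit state |χ⟩_{BC} across the bipartition A|BC. Then for every choice of Hermitian qubit observables X₀, X₁ (Alice) and Y₀, Y₁ (Bob) with eigenvalues ±1 such that the four conditioning events in CP (with Z₀ = σx, Z₁ = σy) have positive probability, one has CP < 4; i.e., no such state can attain the algebraic maximum CP = 4. -/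
open Matrix Complex
open scoped Matrix Kronecker ComplexOrder

noncomputable section
namespace Paper

lemma proj_herm {O : Matrix (Fin 2) (Fin 2) ℂ} (h : Dichotomic O) (a i j : Fin 2) :
    Proj a O i j = star (Proj a O j i) := by
  have h1 := h.1.apply i j
  unfold Proj
  have h2 : (1 : Matrix (Fin 2) (Fin 2) ℂ) i j = star ((1 : Matrix (Fin 2) (Fin 2) ℂ) j i) := by
    fin_cases i <;> fin_cases j <;> simp
  split_ifs <;> simp [← h1, h2]

lemma proj_idem {O : Matrix (Fin 2) (Fin 2) ℂ} (h : Dichotomic O) (a : Fin 2) :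
    Proj a O * Proj a O = Proj a O := by
  have h1 := h.2
  unfold Proj
  split_ifs
  · simp only [smul_mul_assoc, mul_smul_comm, mul_add, add_mul, h1, smul_smul, mul_one, one_mul]
    module
  · simp only [smul_mul_assoc, mul_smul_comm, mul_add, add_mul, h1, smul_smul, mul_one, one_mul,
      neg_mul, mul_neg, neg_neg]
    module

/-- Alice's outcome weight. -/
def alph (φ : Fin 2 → ℂ) (P : Matrix (Fin 2) (Fin 2) ℂ) : ℂ :=
  ∑ k, ∑ l, P k l * φ l * star (φ k)

/-- Charlie's state conditioned on Bob's outcome. -/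
def tau (χ : Fin 2 × Fin 2 → ℂ) (P : Matrix (Fin 2) (Fin 2) ℂ) : Matrix (Fin 2) (Fin 2) ℂ :=
  Matrix.of fun i j => ∑ k, ∑ l, P k l * χ (l, i) * star (χ (k, j))

lemma condState_eq (φ : Fin 2 → ℂ) (χ : Fin 2 × Fin 2 → ℂ) (X Y : Matrix (Fin 2) (Fin 2) ℂ)
    (a b : Fin 2) :
    condState (outer fun i : Fin 2 × Fin 2 × Fin 2 => φ i.1 * χ i.2) X Y a b
      = alph φ (Proj a X) • tau χ (Proj b Y) := by
  unfold condState trAB alph tau outer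
  generalize Proj a X = P
  generalize Proj b Y = Q
  ext i j
  fin_cases i <;> fin_cases j <;>
    simp [Matrix.mul_apply, Fintype.sum_prod_type, Fin.sum_univ_two, Matrix.one_apply] <;> ring

lemma alph_im (φ : Fin 2 → ℂ) {O : Matrix (Fin 2) (Fin 2) ℂ} (h : Dichotomic O) (a : Fin 2) :
    (alph φ (Proj a O)).im = 0 := by
  have h00 := proj_herm h a 0 0
  have h11 := proj_herm h a 1 1
  have h01 := proj_herm h a 0 1
  unfold alph
  generalize Proj a O = P at *
  have e0 := congrArg Complex.im h00
  have e1 := congrArg Complex.im h11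
  simp at e0 e1
  have f0 : (P 0 0).im = 0 := by linarith
  have f1 : (P 1 1).im = 0 := by linarith
  simp [Fin.sum_univ_two, h01, f0, f1]
  ring

lemma tau_eq (χ : Fin 2 × Fin 2 → ℂ) {O : Matrix (Fin 2) (Fin 2) ℂ} (h : Dichotomic O)
    (b : Fin 2) : ∃ w : Matrix (Fin 2) (Fin 2) ℂ, ∀ i j,
      tau χ (Proj b O) i j = w 0 i * star (w 0 j) + w 1 i * star (w 1 j) := by
  refine ⟨Proj b O * Matrix.of fun l i => χ (l, i), fun i j => ?_⟩
  have hh := proj_herm h b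
  have hi := proj_idem h b
  unfold tau
  generalize Proj b O = P at *
  have e : ∀ k l, P k l = star (P 0 k) * P 0 l + star (P 1 k) * P 1 l := fun k l => by
    conv_lhs => rw [← hi]
    rw [Matrix.mul_apply, Fin.sum_univ_two, hh k 0, hh k 1]
  simp only [Matrix.of_apply, Matrix.mul_apply, Fin.sum_univ_two, star_add, star_mul']
  linear_combination χ (0, i) * star (χ (0, j)) * e 0 0 + χ (1, i) * star (χ (0, j)) * e 0 1 +
    χ (0, i) * star (χ (1, j)) * e 1 0 + χ (1, i) * star (χ (1, j)) * e 1 1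

lemma condProb_smul (Z τ : Matrix (Fin 2) (Fin 2) ℂ) (α : ℂ) (hα : α.im = 0)
    (hp : 0 < ((α • τ).trace).re) :
    condProb Z (α • τ) 0 = condProb Z τ 0 := by
  unfold condProb
  have hr : α.re ≠ 0 := by
    intro h0
    have : α = 0 := Complex.ext h0 hα
    simp [this] at hp
  simp only [Matrix.mul_smul, Matrix.trace_smul, smul_eq_mul, Complex.mul_re, hα, zero_mul,
    sub_zero]
  exact mul_div_mul_left _ _ hr

lemma quad (a b c d s : ℝ) (hs : s ^ 2 = 1) :
    a * c + b * d + s * (b * c - a * d) ≤ (3 / 4) * (a ^ 2 + b ^ 2 + c ^ 2 + d ^ 2) := by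
  rcases (sq_eq_sq_iff_eq_or_eq_neg.mp (hs.trans (one_pow 2).symm)) with rfl | rfl <;>
  nlinarith [sq_nonneg (3 * a - 2 * (c - d)), sq_nonneg (3 * b - 2 * (c + d)),
    sq_nonneg (3 * a - 2 * (c + d)), sq_nonneg (3 * b - 2 * (d - c)), sq_nonneg c, sq_nonneg d]

lemma tau_bound (χ : Fin 2 × Fin 2 → ℂ) {O : Matrix (Fin 2) (Fin 2) ℂ} (h : Dichotomic O)
    (b : Fin 2) (hne : (tau χ (Proj b O)).trace.re ≠ 0) :
    condProb sx (tau χ (Proj b O)) 0 + condProb sy (tau χ (Proj b O)) 0 < 2 := by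
  obtain ⟨w, hw⟩ := tau_eq χ h b
  generalize tau χ (Proj b O) = τ at *
  unfold condProb
  have ht : τ.trace.re = (w 0 0).re ^ 2 + (w 0 0).im ^ 2 + (w 0 1).re ^ 2 + (w 0 1).im ^ 2
      + ((w 1 0).re ^ 2 + (w 1 0).im ^ 2 + (w 1 1).re ^ 2 + (w 1 1).im ^ 2) := by
    simp [Matrix.trace, Fin.sum_univ_two, hw]
    ring
  have hpos : 0 < τ.trace.re := by
    refine lt_of_le_of_ne ?_ (Ne.symm hne)
    rw [ht]; positivity
  rw [← add_div, div_lt_iff₀ hpos]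
  have key : (Proj 0 sx * τ).trace.re + (Proj 0 sy * τ).trace.re ≤ (7 / 4) * τ.trace.re := by
    rw [ht]
    simp [Proj, sx, sy, Matrix.trace, Matrix.mul_apply, Fin.sum_univ_two, hw]
    have q1 := quad (w 0 0).re (w 0 0).im (w 0 1).re (w 0 1).im
    have q2 := quad (w 1 0).re (w 1 0).im (w 1 1).re (w 1 1).im
    have a1 := q1 1 (by norm_num)
    have a2 := q1 (-1) (by norm_num)
    have b1 := q2 1 (by norm_num)
    have b2 := q2 (-1) (by norm_num)
    ring_nf at a1 a2 b1 b2 ⊢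
    linarith
  linarith

/-- no three-qubit pure state that is a product across the bipartition `A|BC`
can attain the algebraic maximum `CP = 4`. -/
theorem stmt14 (φA : Fin 2 → ℂ) (χ : Fin 2 × Fin 2 → ℂ)
    (hφ : UnitVec φA) (hχ : UnitVec χ)
    (X0 X1 Y0 Y1 : Matrix (Fin 2) (Fin 2) ℂ)
    (hX0 : Dichotomic X0) (hX1 : Dichotomic X1) (hY0 : Dichotomic Y0) (hY1 : Dichotomic Y1)
    (hpos : PosEvents (outer fun i : Fin 2 × Fin 2 × Fin 2 => φA i.1 * χ i.2) X0 X1 Y0 Y1) :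
    CP (outer fun i : Fin 2 × Fin 2 × Fin 2 => φA i.1 * χ i.2) X0 X1 Y0 Y1 < 4 := by
  obtain ⟨h1, h2, h3, h4⟩ := hpos
  unfold CP
  rw [condState_eq] at h1 h2 h3 h4
  simp only [condState_eq]
  rw [condProb_smul _ _ _ (alph_im φA hX0 1) h1, condProb_smul _ _ _ (alph_im φA hX1 0) h2,
    condProb_smul _ _ _ (alph_im φA hX0 0) h3, condProb_smul _ _ _ (alph_im φA hX1 0) h4]
  have n0 : (tau χ (Proj 1 Y0)).trace.re ≠ 0 := by
    intro h0
    simp [Complex.mul_re, h0, alph_im φA hX0 1] at h1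
  have n1 : (tau χ (Proj 1 Y1)).trace.re ≠ 0 := by
    intro h0
    simp [Complex.mul_re, h0, alph_im φA hX1 0] at h2
  have t0 := tau_bound χ hY0 1 n0
  have t1 := tau_bound χ hY1 1 n1
  linarith

end Paper
end
end

section
/- Let |ψ⟩ = |χ⟩_{AB} ⊗ |φ⟩_C be a three-qubit pure state that is a product of a two-qubit state |χ⟩_{AB} on the first two factors and a qubit state |φ⟩_C on the third factor (bipartition C|AB). Then for every choice of Hermitian qubit observables X₀, X₁ (Alice) and Y₀, Y₁ (Bob) with eigenvalues ±1 such that the four conditioning events in CP (with Z₀ = σx, Z₁ = σy) have positive probability, CP = 2·[Tr(Π_{0|σx} |φ⟩⟨φ|) + Tr(Π_{0|σy} |φ⟩⟨φ|)], and hence CP ≤ 2 + √2. -/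
open Matrix Complex
open scoped Matrix Kronecker ComplexOrder

noncomputable section
namespace Paper

/-- Conditioning a product state across `C|AB` gives a multiple of `|φ⟩⟨φ|`. -/
lemma condState_prod (φC : Fin 2 → ℂ) (χ : Fin 2 × Fin 2 → ℂ)
    (X Y : Matrix (Fin 2) (Fin 2) ℂ) (a b : Fin 2) :
    ∃ s : ℂ, condState (outer fun i : Fin 2 × Fin 2 × Fin 2 => χ (i.1, i.2.1) * φC i.2.2) X Y a b
      = s • outer φC := by
  refine ⟨∑ k : Fin 2, ∑ l : Fin 2, ∑ k' : Fin 2, ∑ l' : Fin 2,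
    Proj a X k k' * Proj b Y l l' * χ (k', l') * star (χ (k, l)), ?_⟩
  unfold condState
  generalize Proj a X = P
  generalize Proj b Y = Q
  ext i j
  fin_cases i <;> fin_cases j <;>
  simp [trAB, outer, Matrix.mul_apply, Fintype.sum_prod_type, Fin.sum_univ_two,
    Matrix.kroneckerMap_apply] <;> ring

lemma trace_outer (φC : Fin 2 → ℂ) (hφ : UnitVec φC) : (outer φC).trace = 1 := by
  unfold UnitVec at hφ
  rw [← hφ]
  simp [outer, Matrix.trace, mul_comm]

lemma condProb_smul_s16 (φC : Fin 2 → ℂ) (hφ : UnitVec φC) (Z σ : Matrix (Fin 2) (Fin 2) ℂ)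
    (hσ : ∃ s : ℂ, σ = s • outer φC) (hpos : 0 < σ.trace.re)
    (him : (Proj 0 Z * outer φC).trace.im = 0) :
    condProb Z σ 0 = (Proj 0 Z * outer φC).trace.re := by
  obtain ⟨s, rfl⟩ := hσ
  rw [Matrix.trace_smul, trace_outer φC hφ] at hpos
  simp only [smul_eq_mul, mul_one] at hpos
  unfold condProb
  rw [Matrix.mul_smul, Matrix.trace_smul, Matrix.trace_smul, trace_outer φC hφ]
  simp only [smul_eq_mul, mul_one, Complex.mul_re, him, mul_zero, sub_zero]
  field_simp

lemma trace_sx (φC : Fin 2 → ℂ) (hφ : UnitVec φC) :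
    (Proj 0 sx * outer φC).trace =
      ((1 / 2 + ((φC 0).re * (φC 1).re + (φC 0).im * (φC 1).im) : ℝ) : ℂ) := by
  have h := trace_outer φC hφ
  simp [Matrix.trace, outer, Fin.sum_univ_two, Complex.ext_iff] at h
  simp [Proj, sx, Matrix.trace, outer, Matrix.mul_apply, Fin.sum_univ_two, Complex.ext_iff,
    Matrix.one_apply]
  constructor <;> linarith [h.1, h.2]

lemma trace_sy (φC : Fin 2 → ℂ) (hφ : UnitVec φC) :
    (Proj 0 sy * outer φC).trace =
      ((1 / 2 + ((φC 0).re * (φC 1).im - (φC 0).im * (φC 1).re) : ℝ) : ℂ) := by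
  have h := trace_outer φC hφ
  simp [Matrix.trace, outer, Fin.sum_univ_two, Complex.ext_iff] at h
  simp [Proj, sy, Matrix.trace, outer, Matrix.mul_apply, Fin.sum_univ_two, Complex.ext_iff,
    Matrix.one_apply]
  constructor <;> linarith [h.1, h.2]

/-- for a three-qubit pure state that is a product across the bipartition `C|AB`,
`CP = 2·[Tr(Π_{0|σx}|φ⟩⟨φ|) + Tr(Π_{0|σy}|φ⟩⟨φ|)]`, and hence `CP ≤ 2 + √2`. -/
theorem stmt16 (φC : Fin 2 → ℂ) (χ : Fin 2 × Fin 2 → ℂ)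
    (hφ : UnitVec φC) (hχ : UnitVec χ)
    (X0 X1 Y0 Y1 : Matrix (Fin 2) (Fin 2) ℂ)
    (hX0 : Dichotomic X0) (hX1 : Dichotomic X1) (hY0 : Dichotomic Y0) (hY1 : Dichotomic Y1)
    (hpos : PosEvents (outer fun i : Fin 2 × Fin 2 × Fin 2 => χ (i.1, i.2.1) * φC i.2.2)
      X0 X1 Y0 Y1) :
    CP (outer fun i : Fin 2 × Fin 2 × Fin 2 => χ (i.1, i.2.1) * φC i.2.2) X0 X1 Y0 Y1
      = 2 * (((Proj 0 sx * outer φC).trace).re + ((Proj 0 sy * outer φC).trace).re) ∧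
    CP (outer fun i : Fin 2 × Fin 2 × Fin 2 => χ (i.1, i.2.1) * φC i.2.2) X0 X1 Y0 Y1
      ≤ 2 + Real.sqrt 2 := by
  obtain ⟨h1, h2, h3, h4⟩ := hpos
  have hx : (Proj 0 sx * outer φC).trace.im = 0 := by
    rw [trace_sx φC hφ, Complex.ofReal_im]
  have hy : (Proj 0 sy * outer φC).trace.im = 0 := by
    rw [trace_sy φC hφ, Complex.ofReal_im]
  refine and_iff_left_of_imp (fun h => ?_) |>.mpr ?_
  · rw [h, trace_sx φC hφ, trace_sy φC hφ, Complex.ofReal_re, Complex.ofReal_re]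
    have hn := trace_outer φC hφ
    simp only [Matrix.trace, outer, Fin.sum_univ_two, Complex.ext_iff, Matrix.diag_apply,
      Matrix.of_apply, Complex.add_re, Complex.mul_re, Complex.star_def, Complex.conj_re,
      Complex.conj_im, Complex.one_re] at hn
    have hn1 := hn.1
    generalize (φC 0).re = p at *
    generalize (φC 0).im = q at *
    generalize (φC 1).re = r at *
    generalize (φC 1).im = t at *
    have key : 2 * ((p * r + q * t) + (p * t - q * r)) ≤ Real.sqrt 2 := by
      apply Real.le_sqrt_of_sq_le
      have e1 : p ^ 2 + q ^ 2 + (r ^ 2 + t ^ 2) = 1 := by linarith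
      have e2 : (p ^ 2 + q ^ 2) * (r ^ 2 + t ^ 2) ≤ 1 / 4 := by
        nlinarith [sq_nonneg (p ^ 2 + q ^ 2 - (r ^ 2 + t ^ 2))]
      nlinarith [sq_nonneg ((p * r + q * t) - (p * t - q * r))]
    linarith
  · unfold CP
    rw [condProb_smul_s16 φC hφ sx _ (condState_prod φC χ X0 Y0 1 1) h1 hx,
      condProb_smul_s16 φC hφ sx _ (condState_prod φC χ X1 Y1 0 1) h2 hx,
      condProb_smul_s16 φC hφ sy _ (condState_prod φC χ X0 Y1 0 1) h3 hy,
      condProb_smul_s16 φC hφ sy _ (condState_prod φC χ X1 Y0 0 1) h4 hy]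
    ring

end Paper
end
end
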